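/- arXiv:1412.2267 — 5 statements merged into one kernel-verified Lean document; each statement's English description precedes it below -/
import Mathlib

section
/- If a generalized rectangular diagram R' is obtained from a generalized rectangular diagram R by the inverse of an end shift of type L, then R' can be obtained from R by a finite sequence consisting of one end shift of type L, commutations, and one destabilization of type L. -/
namespace RectDiag

/-- A generalized rectangular diagram: a finite subset of `ℝ²`, whose elements are
called the vertices of the diagram. -/
abbrev GRD := Finset (ℝ × ℝ)

/-- Two diagrams are combinatorially equivalent (and hence identified) if one maps onto
the other under `(x, y) ↦ (f x, g y)` for some strictly increasing `f g : ℝ → ℝ`. -/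
def CombEquiv (R R' : GRD) : Prop :=
  ∃ f g : ℝ → ℝ, StrictMono f ∧ StrictMono g ∧
    R' = R.image fun p => (f p.1, g p.2)

/-- Move every vertex on the vertical line `x = a` to the vertical line `x = b`. -/
noncomputable def moveCol (R : GRD) (a b : ℝ) : GRD :=
  R.image fun p => if p.1 = a then (b, p.2) else p

/-- Move every vertex on the horizontal line `y = a` to the horizontal line `y = b`. -/
noncomputable def moveRow (R : GRD) (a b : ℝ) : GRD :=
  R.image fun p => if p.2 = a then (p.1, b) else p

/-- Cyclic permutation: an extreme (rightmost, leftmost, top or bottom) edge is moved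
to the opposite side of the diagram; only the coordinate perpendicular to the edge
changes. -/
def CyclicPermutation (R R' : GRD) : Prop :=
  (∃ a b : ℝ, (∃ p ∈ R, p.1 = a) ∧
    (((∀ p ∈ R, p.1 ≤ a) ∧ ∀ p ∈ R, b < p.1) ∨
     ((∀ p ∈ R, a ≤ p.1) ∧ ∀ p ∈ R, p.1 < b)) ∧
    R' = moveCol R a b) ∨
  (∃ a b : ℝ, (∃ p ∈ R, p.2 = a) ∧
    (((∀ p ∈ R, p.2 ≤ a) ∧ ∀ p ∈ R, b < p.2) ∨
     ((∀ p ∈ R, a ≤ p.2) ∧ ∀ p ∈ R, p.2 < b)) ∧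
    R' = moveRow R a b)

/-- Two sets of reals interleave in the cyclic order: their elements alternate
`a₁ < b₁ < a₂ < b₂` (or with the roles of the two sets exchanged). -/
def Interleave (A B : ℝ → Prop) : Prop :=
  (∃ a₁, A a₁ ∧ ∃ b₁, B b₁ ∧ ∃ a₂, A a₂ ∧ ∃ b₂, B b₂ ∧ a₁ < b₁ ∧ b₁ < a₂ ∧ a₂ < b₂) ∨
  (∃ b₁, B b₁ ∧ ∃ a₁, A a₁ ∧ ∃ b₂, B b₂ ∧ ∃ a₂, A a₂ ∧ b₁ < a₁ ∧ a₁ < b₂ ∧ b₂ < a₂)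

/-- Exchange the vertical lines `x = a` and `x = b` of a diagram. -/
noncomputable def swapCols (R : GRD) (a b : ℝ) : GRD :=
  R.image fun p => if p.1 = a then (b, p.2) else if p.1 = b then (a, p.2) else p

/-- Exchange the horizontal lines `y = a` and `y = b` of a diagram. -/
noncomputable def swapRows (R : GRD) (a b : ℝ) : GRD :=
  R.image fun p => if p.2 = a then (p.1, b) else if p.2 = b then (p.1, a) else p

/-- Commutation: two neighboring parallel edges (no vertex lies strictly between the
two parallel lines containing them) that do not interleave exchange their positions. -/
def Commutation (R R' : GRD) : Prop :=
  (∃ a b : ℝ, a < b ∧ (∃ p ∈ R, p.1 = a) ∧ (∃ p ∈ R, p.1 = b) ∧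
    (∀ p ∈ R, ¬ (a < p.1 ∧ p.1 < b)) ∧
    ¬ Interleave (fun y => (a, y) ∈ R) (fun y => (b, y) ∈ R) ∧
    R' = swapCols R a b) ∨
  (∃ a b : ℝ, a < b ∧ (∃ p ∈ R, p.2 = a) ∧ (∃ p ∈ R, p.2 = b) ∧
    (∀ p ∈ R, ¬ (a < p.2 ∧ p.2 < b)) ∧
    ¬ Interleave (fun x => (x, a) ∈ R) (fun x => (x, b) ∈ R) ∧
    R' = swapRows R a b)

def strictlyBetween (a t b : ℝ) : Prop := (a < t ∧ t < b) ∨ (b < t ∧ t < a)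

/-- Stabilization: a vertex `(x, y)` is replaced by the three other corners of a small
square with corners `(x, y)`, `(x', y)`, `(x, y')`, `(x', y')` (fresh lines `x'`, `y'`,
with no vertex of the diagram strictly between the lines `x, x'` nor between `y, y'`).
The two new short edges (sides of the square through the corner `(x', y')`) emerge from
their common end downward-and-leftward or upward-and-rightward exactly when the square
lies to the upper right or to the lower left of the original vertex (type L,
`typeL = true`); for type N (`typeL = false`) they emerge upward-and-leftward or
downward-and-rightward, i.e. the square lies to the upper left or to the lower right. -/
def Stab (typeL : Bool) (R R' : GRD) : Prop :=
  ∃ x y x' y' : ℝ, (x, y) ∈ R ∧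
    (if typeL then ((x < x' ∧ y < y') ∨ (x' < x ∧ y' < y))
     else ((x' < x ∧ y < y') ∨ (x < x' ∧ y' < y))) ∧
    (∀ p ∈ R, ¬ strictlyBetween x p.1 x') ∧
    (∀ p ∈ R, ¬ strictlyBetween y p.2 y') ∧
    (∀ p ∈ R, p.1 ≠ x') ∧ (∀ p ∈ R, p.2 ≠ y') ∧
    R' = insert (x', y) (insert (x, y') (insert (x', y') (R.erase (x, y))))

/-- End shift.  For adjacent vertices `v₁`, `v₂` on an edge (no vertex of the diagram
between them on the edge), where for type L (`typeL = true`) the vertex `v₂` has the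
greater coordinate along the edge and for type N (`typeL = false`) the smaller one:
either the shifts of `v₁`, `v₂` by `ε > 0` in the positive perpendicular direction are
added and `v₁` is removed, or the shifts by `ε` in the negative perpendicular direction
are added and `v₂` is removed; `ε` is small enough that no vertex of the diagram lies
between (or on) the line through `v₁, v₂` and the line through the shifted vertices. -/
def EndShift (typeL : Bool) (R R' : GRD) : Prop :=
  (∃ a y₁ y₂ ε : ℝ, 0 < ε ∧ y₁ < y₂ ∧ (a, y₁) ∈ R ∧ (a, y₂) ∈ R ∧
    (∀ t : ℝ, (a, t) ∈ R → ¬ (y₁ < t ∧ t < y₂)) ∧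
    (((∀ p ∈ R, ¬ (a < p.1 ∧ p.1 ≤ a + ε)) ∧
       R' = insert (a + ε, y₁) (insert (a + ε, y₂)
         (R.erase (a, if typeL then y₁ else y₂)))) ∨
     ((∀ p ∈ R, ¬ (a - ε ≤ p.1 ∧ p.1 < a)) ∧
       R' = insert (a - ε, y₁) (insert (a - ε, y₂)
         (R.erase (a, if typeL then y₂ else y₁)))))) ∨
  (∃ a x₁ x₂ ε : ℝ, 0 < ε ∧ x₁ < x₂ ∧ (x₁, a) ∈ R ∧ (x₂, a) ∈ R ∧
    (∀ t : ℝ, (t, a) ∈ R → ¬ (x₁ < t ∧ t < x₂)) ∧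
    (((∀ p ∈ R, ¬ (a < p.2 ∧ p.2 ≤ a + ε)) ∧
       R' = insert (x₁, a + ε) (insert (x₂, a + ε)
         (R.erase (if typeL then x₁ else x₂, a)))) ∨
     ((∀ p ∈ R, ¬ (a - ε ≤ p.2 ∧ p.2 < a)) ∧
       R' = insert (x₁, a - ε) (insert (x₂, a - ε)
         (R.erase (if typeL then x₂ else x₁, a))))))

/-- Vertex addition: a new vertex is added on the vertical (respectively horizontal)
line through an existing vertex, provided no vertex of the diagram lies on the
horizontal (respectively vertical) line through the new vertex. -/
def VertexAddition (R R' : GRD) : Prop :=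
  ∃ v : ℝ × ℝ, v ∉ R ∧ R' = insert v R ∧
    (((∃ w ∈ R, w.1 = v.1) ∧ ∀ w ∈ R, w.2 ≠ v.2) ∨
     ((∃ w ∈ R, w.2 = v.2) ∧ ∀ w ∈ R, w.1 ≠ v.1))

/-- An elementary move of type L (`typeL = true`) or N (`typeL = false`): a cyclic
permutation, a commutation, a stabilization or destabilization of the given type, an
end shift of the given type, or a vertex addition. -/
def ElemMove (typeL : Bool) (R R' : GRD) : Prop :=
  CyclicPermutation R R' ∨ Commutation R R' ∨ Stab typeL R R' ∨ Stab typeL R' R ∨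
    EndShift typeL R R' ∨ VertexAddition R R'

/-- One step in a sequence of elementary moves of the given type; since diagrams are
identified up to combinatorial equivalence, combinatorially equivalent diagrams are
also related by a step. -/
def Step (typeL : Bool) (R R' : GRD) : Prop :=
  ElemMove typeL R R' ∨ CombEquiv R R'

/-- In the cyclic order (on `ℝ` closed up into a circle), the elements of `A`, then the
point `u`, then the elements of `B` occur in this cyclic order. -/
def CyclicBetween (A : Finset ℝ) (u : ℝ) (B : Finset ℝ) : Prop :=
  ((∀ a ∈ A, a < u) ∧ (∀ b ∈ B, u < b)) ∨
  ((∀ b ∈ B, u < b) ∧ (∀ a ∈ A, ∀ b ∈ B, b < a)) ∨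
  ((∀ a ∈ A, a < u) ∧ (∀ a ∈ A, ∀ b ∈ B, b < a))

/-- Edge breaking.  The vertices of a horizontal (respectively vertical) edge on the
line `c` are separated into two nonempty parts `S₁`, `S₂`, placed on neighboring lines
`c₁ ≤ c ≤ c₂` (`c₁ < c₂`, with no other vertex of the diagram between the lines `c₁`
and `c₂`), forming edges `e₁` (from `S₁`, on `c₁`) and `e₂` (from `S₂`, on `c₂`, the one
with the greater perpendicular coordinate); the two pieces are joined by a short edge on
a fresh line `u`, which in the cyclic order is greater than the coordinates of the
vertices of `e₂` and smaller than those of `e₁` for type L, and the other way around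
(the roles of `e₁` and `e₂` exchanged) for type N. -/
def EdgeBreaking (typeL : Bool) (R R' : GRD) : Prop :=
  (∃ c c₁ c₂ u : ℝ, ∃ S₁ S₂ : Finset ℝ,
    c₁ < c₂ ∧ c₁ ≤ c ∧ c ≤ c₂ ∧ S₁.Nonempty ∧ S₂.Nonempty ∧ Disjoint S₁ S₂ ∧
    (∀ x : ℝ, (x, c) ∈ R ↔ x ∈ S₁ ∪ S₂) ∧
    (∀ p ∈ R, p.1 ≠ u) ∧
    (∀ p ∈ R, c₁ ≤ p.2 ∧ p.2 ≤ c₂ → p.2 = c) ∧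
    (if typeL then CyclicBetween S₂ u S₁ else CyclicBetween S₁ u S₂) ∧
    R' = ((R.filter fun p => p.2 ≠ c) ∪ S₁.image (fun x => (x, c₁)) ∪
      S₂.image (fun x => (x, c₂)) ∪ {(u, c₁), (u, c₂)})) ∨
  (∃ c c₁ c₂ u : ℝ, ∃ S₁ S₂ : Finset ℝ,
    c₁ < c₂ ∧ c₁ ≤ c ∧ c ≤ c₂ ∧ S₁.Nonempty ∧ S₂.Nonempty ∧ Disjoint S₁ S₂ ∧
    (∀ y : ℝ, (c, y) ∈ R ↔ y ∈ S₁ ∪ S₂) ∧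
    (∀ p ∈ R, p.2 ≠ u) ∧
    (∀ p ∈ R, c₁ ≤ p.1 ∧ p.1 ≤ c₂ → p.1 = c) ∧
    (if typeL then CyclicBetween S₂ u S₁ else CyclicBetween S₁ u S₂) ∧
    R' = ((R.filter fun p => p.1 ≠ c) ∪ S₁.image (fun y => (c₁, y)) ∪
      S₂.image (fun y => (c₂, y)) ∪ {(c₁, u), (c₂, u)}))

/-- `p` lies in the open rectangle `(x₀, x₁) × (y₀, y₁)`. -/
def inRect (x₀ x₁ y₀ y₁ : ℝ) (p : ℝ × ℝ) : Prop :=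
  x₀ < p.1 ∧ p.1 < x₁ ∧ y₀ < p.2 ∧ p.2 < y₁

/-- A flype of type L (in the forward direction): for `x₀ < x₁ < x₂`, `y₀ < y₁ < y₂`,
with rectangles `r_ij = (x_i, x_{i+1}) × (y_j, y_{j+1})`: the rectangle `r₁₁` contains
no vertex; in each of `r₀₁` and `r₁₀`, of any two vertices the right one is higher; and
every vertex `v` in `r₀₀` has a vertex `v₀₁ ∈ r₀₁` with the same `x`-coordinate and a
vertex `v₁₀ ∈ r₁₀` with the same `y`-coordinate.  The move takes each such `v` to the
fourth corner of the rectangle with corners `v`, `v₀₁`, `v₁₀`, all other vertices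
staying fixed. -/
def FlypeLOnce (R R' : GRD) : Prop :=
  ∃ x₀ x₁ x₂ y₀ y₁ y₂ : ℝ, x₀ < x₁ ∧ x₁ < x₂ ∧ y₀ < y₁ ∧ y₁ < y₂ ∧
    (∀ p ∈ R, ¬ inRect x₁ x₂ y₁ y₂ p) ∧
    (∀ p ∈ R, ∀ q ∈ R, inRect x₀ x₁ y₁ y₂ p → inRect x₀ x₁ y₁ y₂ q →
      p.1 < q.1 → p.2 < q.2) ∧
    (∀ p ∈ R, ∀ q ∈ R, inRect x₁ x₂ y₀ y₁ p → inRect x₁ x₂ y₀ y₁ q →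
      p.1 < q.1 → p.2 < q.2) ∧
    ∃ φ : ℝ × ℝ → ℝ × ℝ,
      (∀ p ∈ R, ¬ inRect x₀ x₁ y₀ y₁ p → φ p = p) ∧
      (∀ p ∈ R, inRect x₀ x₁ y₀ y₁ p →
        ∃ q ∈ R, ∃ r ∈ R, inRect x₀ x₁ y₁ y₂ q ∧ q.1 = p.1 ∧
          inRect x₁ x₂ y₀ y₁ r ∧ r.2 = p.2 ∧ φ p = (r.1, q.2)) ∧
      R' = R.image φ

/-- A flype of type L: the move just described or its inverse. -/
def FlypeL (R R' : GRD) : Prop := FlypeLOnce R R' ∨ FlypeLOnce R' R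

/-- A fence diagram: posts are horizontal segments `[l, r] × {y}`, `y ∈ posts` (all
related by a vertical shift); wires are vertical segments recorded as
`(x, bottom level, top level)`, with endpoints interior to posts and no two wires on
the same vertical line. -/
structure Fence where
  posts : Finset ℝ
  l : ℝ
  r : ℝ
  wires : Finset (ℝ × ℝ × ℝ)
  hlr : l < r
  hx : ∀ w ∈ wires, l < w.1 ∧ w.1 < r
  hy : ∀ w ∈ wires, w.2.1 ∈ posts ∧ w.2.2 ∈ posts ∧ w.2.1 < w.2.2
  hinj : ∀ w ∈ wires, ∀ w' ∈ wires, w.1 = w'.1 → w = w'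

/-- Combinatorial equivalence of fence diagrams. -/
def FenceEquiv (F F' : Fence) : Prop :=
  ∃ f g : ℝ → ℝ, StrictMono f ∧ StrictMono g ∧
    F'.l = f F.l ∧ F'.r = f F.r ∧
    F'.posts = F.posts.image g ∧
    F'.wires = F.wires.image fun w => (f w.1, g w.2.1, g w.2.2)

/-- The wire on the vertical line `x` joining the posts at levels `p` and `q`. -/
noncomputable def mkWire (x p q : ℝ) : ℝ × ℝ × ℝ := (x, min p q, max p q)

/-- Twirl: the top (respectively bottom) post is moved to the opposite side, taking
along all wires attached to it. -/
def Twirl (F F' : Fence) : Prop :=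
  F'.l = F.l ∧ F'.r = F.r ∧
  ((∃ t b : ℝ, t ∈ F.posts ∧ (∀ y ∈ F.posts, y ≤ t) ∧ (∀ y ∈ F.posts, b < y) ∧
     F'.posts = insert b (F.posts.erase t) ∧
     F'.wires = F.wires.image fun w => if w.2.2 = t then (w.1, b, w.2.1) else w) ∨
   (∃ t b : ℝ, b ∈ F.posts ∧ (∀ y ∈ F.posts, b ≤ y) ∧ (∀ y ∈ F.posts, y < t) ∧
     F'.posts = insert t (F.posts.erase b) ∧
     F'.wires = F.wires.image fun w => if w.2.1 = b then (w.1, w.2.2, t) else w))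

/-- Turn: the rightmost (respectively leftmost) wire is moved to the opposite side. -/
def Turn (F F' : Fence) : Prop :=
  F'.l = F.l ∧ F'.r = F.r ∧ F'.posts = F.posts ∧
  ((∃ w ∈ F.wires, ∃ x : ℝ, (∀ w' ∈ F.wires, w'.1 ≤ w.1) ∧
     F.l < x ∧ (∀ w' ∈ F.wires, w' ≠ w → x < w'.1) ∧ x < w.1 ∧
     F'.wires = insert (x, w.2) (F.wires.erase w)) ∨
   (∃ w ∈ F.wires, ∃ x : ℝ, (∀ w' ∈ F.wires, w.1 ≤ w'.1) ∧
     x < F.r ∧ (∀ w' ∈ F.wires, w' ≠ w → w'.1 < x) ∧ w.1 < x ∧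
     F'.wires = insert (x, w.2) (F.wires.erase w)))

/-- Two wires interleave if exactly one endpoint level of one lies strictly between the
endpoint levels of the other. -/
def WiresInterleave (w w' : ℝ × ℝ × ℝ) : Prop :=
  (w.2.1 < w'.2.1 ∧ w'.2.1 < w.2.2 ∧ w.2.2 < w'.2.2) ∨
  (w'.2.1 < w.2.1 ∧ w.2.1 < w'.2.2 ∧ w'.2.2 < w.2.2)

/-- Slip: two neighboring non-interleaving wires exchange their horizontal positions. -/
def Slip (F F' : Fence) : Prop :=
  F'.l = F.l ∧ F'.r = F.r ∧ F'.posts = F.posts ∧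
  ∃ w₁ ∈ F.wires, ∃ w₂ ∈ F.wires, w₁.1 < w₂.1 ∧
    (∀ w ∈ F.wires, ¬ (w₁.1 < w.1 ∧ w.1 < w₂.1)) ∧
    ¬ WiresInterleave w₁ w₂ ∧
    F'.wires = insert (w₂.1, w₁.2) (insert (w₁.1, w₂.2) ((F.wires.erase w₁).erase w₂))

/-- `a`, `b`, `c` occur in this cyclic order on `ℝ` closed up into a circle. -/
def CyclicOrd3 (a b c : ℝ) : Prop :=
  (a < b ∧ b < c) ∨ (b < c ∧ c < a) ∨ (c < a ∧ a < b)

/-- Slide: given two neighboring wires, the left joining posts at levels `a` and `b`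
and the right joining posts at levels `a` and `c` with `a < b < c < a` in the cyclic
order, they are replaced by two wires at the same horizontal positions, the left
joining levels `b` and `c` and the right joining levels `b` and `a`. -/
def Slide (F F' : Fence) : Prop :=
  F'.l = F.l ∧ F'.r = F.r ∧ F'.posts = F.posts ∧
  ∃ a b c x₁ x₂ : ℝ, x₁ < x₂ ∧ CyclicOrd3 a b c ∧
    mkWire x₁ a b ∈ F.wires ∧ mkWire x₂ a c ∈ F.wires ∧
    (∀ w ∈ F.wires, ¬ (x₁ < w.1 ∧ w.1 < x₂)) ∧
    F'.wires = insert (mkWire x₁ b c) (insert (mkWire x₂ b a)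
      ((F.wires.erase (mkWire x₁ a b)).erase (mkWire x₂ a c)))

/-- Inflation: a new post is added at a fresh vertical level and joined to some
existing post by one new wire (on a fresh vertical line). -/
def Inflation (F F' : Fence) : Prop :=
  F'.l = F.l ∧ F'.r = F.r ∧
  ∃ n m x : ℝ, n ∉ F.posts ∧ m ∈ F.posts ∧
    F.l < x ∧ x < F.r ∧ (∀ w ∈ F.wires, w.1 ≠ x) ∧
    F'.posts = insert n F.posts ∧
    F'.wires = insert (mkWire x n m) F.wires

/-- A fence move: a twirl, a turn, a slip, a slide, an inflation or a deflation. -/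
def FenceMove (F F' : Fence) : Prop :=
  Twirl F F' ∨ Turn F F' ∨ Slip F F' ∨ Slide F F' ∨ Inflation F F' ∨ Inflation F' F

/-- One step in a sequence of fence moves; combinatorially equivalent fence diagrams
are identified. -/
def FenceStep (F F' : Fence) : Prop := FenceMove F F' ∨ FenceEquiv F F'

/-- `R(F)`: the generalized rectangular diagram whose vertices are the endpoints of
the wires of the fence diagram `F`. -/
noncomputable def fenceToGRD (F : Fence) : GRD :=
  F.wires.image (fun w => (w.1, w.2.1)) ∪ F.wires.image (fun w => (w.1, w.2.2))

/-- Every vertical edge of the diagram contains exactly two vertices. -/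
def VertTwo (R : GRD) : Prop :=
  ∀ a : ℝ, (∃ y : ℝ, (a, y) ∈ R) →
    ∃ y₁ y₂ : ℝ, y₁ < y₂ ∧ ∀ y : ℝ, ((a, y) ∈ R ↔ (y = y₁ ∨ y = y₂))

/-- `F` is a fence diagram `F(R)` of the diagram `R` (each of whose vertical edges is
assumed to contain exactly two vertices): its wires are the vertical edges of `R` and
its posts are horizontal segments at exactly the levels of the horizontal edges of
`R`. -/
def IsFenceOf (R : GRD) (F : Fence) : Prop :=
  F.posts = R.image Prod.snd ∧
  ∀ w : ℝ × ℝ × ℝ,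
    (w ∈ F.wires ↔ ((w.1, w.2.1) ∈ R ∧ (w.1, w.2.2) ∈ R ∧ w.2.1 < w.2.2))



noncomputable def sw (A : GRD) : GRD := A.image Prod.swap
noncomputable def ng (A : GRD) : GRD := A.image (fun p => -p)

theorem mem_sw (A : GRD) (p : ℝ × ℝ) : p ∈ sw A ↔ (p.2, p.1) ∈ A := by
  simp only [sw, Finset.mem_image]
  constructor
  · rintro ⟨q, hq, rfl⟩; simpa using hq
  · intro h; exact ⟨_, h, rfl⟩

theorem mem_ng (A : GRD) (p : ℝ × ℝ) : p ∈ ng A ↔ (-p.1, -p.2) ∈ A := by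
  simp only [ng, Finset.mem_image]
  constructor
  · rintro ⟨q, hq, rfl⟩; simpa using hq
  · intro h; exact ⟨_, h, by simp⟩

theorem sw_sw (A : GRD) : sw (sw A) = A := by
  ext p; simp [mem_sw]

theorem ng_ng (A : GRD) : ng (ng A) = A := by
  ext p; simp [mem_ng]

theorem sw_insert (A : GRD) (x y : ℝ) : sw (insert (x, y) A) = insert (y, x) (sw A) := by
  simp [sw, Finset.image_insert]
theorem ng_insert (A : GRD) (x y : ℝ) : ng (insert (x, y) A) = insert (-x, -y) (ng A) := by
  simp [ng, Finset.image_insert]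
theorem sw_erase (A : GRD) (x y : ℝ) : sw (A.erase (x, y)) = (sw A).erase (y, x) := by
  ext ⟨p, q⟩; simp [mem_sw, and_comm]
theorem ng_erase (A : GRD) (x y : ℝ) : ng (A.erase (x, y)) = (ng A).erase (-x, -y) := by
  ext ⟨p, q⟩; simp [mem_ng, neg_eq_iff_eq_neg]

theorem sw_swapCols (A : GRD) (a b : ℝ) : sw (swapCols A a b) = swapRows (sw A) a b := by
  simp only [sw, swapCols, swapRows, Finset.image_image]
  congr 1; funext p; simp only [Function.comp]; split_ifs <;> simp_all
theorem sw_swapRows (A : GRD) (a b : ℝ) : sw (swapRows A a b) = swapCols (sw A) a b := by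
  simp only [sw, swapCols, swapRows, Finset.image_image]
  congr 1; funext p; simp only [Function.comp]; split_ifs <;> simp_all
theorem ng_swapCols (A : GRD) (a b : ℝ) (h : a ≠ b) :
    ng (swapCols A a b) = swapCols (ng A) (-b) (-a) := by
  simp only [ng, swapCols, Finset.image_image]
  congr 1; funext p; simp only [Function.comp]
  by_cases h1 : p.1 = a <;> by_cases h2 : p.1 = b <;> simp_all
theorem ng_swapRows (A : GRD) (a b : ℝ) (h : a ≠ b) :
    ng (swapRows A a b) = swapRows (ng A) (-b) (-a) := by
  simp only [ng, swapRows, Finset.image_image]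
  congr 1; funext p; simp only [Function.comp]
  by_cases h1 : p.2 = a <;> by_cases h2 : p.2 = b <;> simp_all

theorem comb_sw {A B : GRD} (h : CombEquiv A B) : CombEquiv (sw A) (sw B) := by
  obtain ⟨f, g, hf, hg, rfl⟩ := h
  refine ⟨g, f, hg, hf, ?_⟩
  simp only [sw, Finset.image_image]; rfl

theorem comb_ng {A B : GRD} (h : CombEquiv A B) : CombEquiv (ng A) (ng B) := by
  obtain ⟨f, g, hf, hg, rfl⟩ := h
  refine ⟨fun x => - f (-x), fun x => - g (-x), ?_, ?_, ?_⟩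
  · intro x y h; simpa using hf (neg_lt_neg h)
  · intro x y h; simpa using hg (neg_lt_neg h)
  · simp only [ng, Finset.image_image]
    congr 1; funext p; simp

theorem inter_ng {A B : ℝ → Prop} (h : Interleave (fun y => B (-y)) (fun y => A (-y))) :
    Interleave A B := by
  rcases h with ⟨a, ha, b, hb, c, hc, d, hd, h1, h2, h3⟩ | ⟨a, ha, b, hb, c, hc, d, hd, h1, h2, h3⟩
  · exact Or.inl ⟨_, hd, _, hc, _, hb, _, ha, by linarith, by linarith, by linarith⟩
  · exact Or.inr ⟨_, hd, _, hc, _, hb, _, ha, by linarith, by linarith, by linarith⟩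

theorem comm_sw {A B : GRD} (h : Commutation A B) : Commutation (sw A) (sw B) := by
  rcases h with ⟨a, b, hab, ⟨p, hp, hpa⟩, ⟨q, hq, hqb⟩, h3, h4, rfl⟩ |
    ⟨a, b, hab, ⟨p, hp, hpa⟩, ⟨q, hq, hqb⟩, h3, h4, rfl⟩
  · right
    exact ⟨a, b, hab, ⟨p.swap, by simpa [mem_sw] using hp, hpa⟩,
      ⟨q.swap, by simpa [mem_sw] using hq, hqb⟩,
      fun r hr => h3 _ ((mem_sw _ _).1 hr), by simpa [mem_sw] using h4, sw_swapCols _ _ _⟩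
  · left
    exact ⟨a, b, hab, ⟨p.swap, by simpa [mem_sw] using hp, hpa⟩,
      ⟨q.swap, by simpa [mem_sw] using hq, hqb⟩,
      fun r hr => h3 _ ((mem_sw _ _).1 hr), by simpa [mem_sw] using h4, sw_swapRows _ _ _⟩

theorem comm_ng {A B : GRD} (h : Commutation A B) : Commutation (ng A) (ng B) := by
  rcases h with ⟨a, b, hab, ⟨p, hp, hpa⟩, ⟨q, hq, hqb⟩, h3, h4, rfl⟩ |
    ⟨a, b, hab, ⟨p, hp, hpa⟩, ⟨q, hq, hqb⟩, h3, h4, rfl⟩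
  · left
    refine ⟨-b, -a, by linarith, ⟨-q, by simpa [mem_ng] using hq, by simp [hqb]⟩,
      ⟨-p, by simpa [mem_ng] using hp, by simp [hpa]⟩,
      fun r hr h => h3 _ ((mem_ng _ _).1 hr) ⟨by linarith [h.2], by linarith [h.1]⟩, ?_,
      ng_swapCols _ _ _ hab.ne⟩
    intro h; apply h4; apply inter_ng; simpa [mem_ng] using h
  · right
    refine ⟨-b, -a, by linarith, ⟨-q, by simpa [mem_ng] using hq, by simp [hqb]⟩,
      ⟨-p, by simpa [mem_ng] using hp, by simp [hpa]⟩,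
      fun r hr h => h3 _ ((mem_ng _ _).1 hr) ⟨by linarith [h.2], by linarith [h.1]⟩, ?_,
      ng_swapRows _ _ _ hab.ne⟩
    intro h; apply h4; apply inter_ng; simpa [mem_ng] using h

theorem stab_sw {A B : GRD} (h : Stab true A B) : Stab true (sw A) (sw B) := by
  obtain ⟨x, y, x', y', h1, h2, h3, h4, h5, h6, rfl⟩ := h
  refine ⟨y, x, y', x', by simpa [mem_sw] using h1, by simpa [and_comm] using h2,
    fun p hp => h4 _ ((mem_sw _ _).1 hp), fun p hp => h3 _ ((mem_sw _ _).1 hp),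
    fun p hp => h6 _ ((mem_sw _ _).1 hp), fun p hp => h5 _ ((mem_sw _ _).1 hp), ?_⟩
  simp only [sw_insert, sw_erase]
  rw [Finset.insert_comm]

theorem sb_ng {a t b : ℝ} (h : strictlyBetween (-a) t (-b)) : strictlyBetween a (-t) b := by
  rcases h with h | h
  · right; constructor <;> linarith [h.1, h.2]
  · left; constructor <;> linarith [h.1, h.2]

theorem stab_ng {A B : GRD} (h : Stab true A B) : Stab true (ng A) (ng B) := by
  obtain ⟨x, y, x', y', h1, h2, h3, h4, h5, h6, rfl⟩ := h
  refine ⟨-x, -y, -x', -y', by simpa [mem_ng] using h1, by simpa [or_comm] using h2,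
    fun p hp h => h3 _ ((mem_ng _ _).1 hp) (sb_ng h),
    fun p hp h => h4 _ ((mem_ng _ _).1 hp) (sb_ng h),
    fun p hp h => h5 _ ((mem_ng _ _).1 hp) (by simp [h]),
    fun p hp h => h6 _ ((mem_ng _ _).1 hp) (by simp [h]), ?_⟩
  simp only [ng_insert, ng_erase]

theorem es_sw {A B : GRD} (h : EndShift true A B) : EndShift true (sw A) (sw B) := by
  rcases h with ⟨a, y₁, y₂, ε, h0, h1, h2, h3, h4, h5⟩ | ⟨a, y₁, y₂, ε, h0, h1, h2, h3, h4, h5⟩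
  · right
    refine ⟨a, y₁, y₂, ε, h0, h1, by simpa [mem_sw] using h2, by simpa [mem_sw] using h3,
      fun t ht => h4 t (by simpa [mem_sw] using ht), ?_⟩
    rcases h5 with ⟨h5, rfl⟩ | ⟨h5, rfl⟩
    · left; exact ⟨fun p hp => h5 _ ((mem_sw _ _).1 hp), by simp [sw_insert, sw_erase]⟩
    · right; exact ⟨fun p hp => h5 _ ((mem_sw _ _).1 hp), by simp [sw_insert, sw_erase]⟩
  · left
    refine ⟨a, y₁, y₂, ε, h0, h1, by simpa [mem_sw] using h2, by simpa [mem_sw] using h3,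
      fun t ht => h4 t (by simpa [mem_sw] using ht), ?_⟩
    rcases h5 with ⟨h5, rfl⟩ | ⟨h5, rfl⟩
    · left; exact ⟨fun p hp => h5 _ ((mem_sw _ _).1 hp), by simp [sw_insert, sw_erase]⟩
    · right; exact ⟨fun p hp => h5 _ ((mem_sw _ _).1 hp), by simp [sw_insert, sw_erase]⟩

theorem es_ng {A B : GRD} (h : EndShift true A B) : EndShift true (ng A) (ng B) := by
  rcases h with ⟨a, y₁, y₂, ε, h0, h1, h2, h3, h4, h5⟩ | ⟨a, y₁, y₂, ε, h0, h1, h2, h3, h4, h5⟩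
  · left
    refine ⟨-a, -y₂, -y₁, ε, h0, by linarith, by simpa [mem_ng] using h3,
      by simpa [mem_ng] using h2, fun t ht h => h4 (-t) (by simpa [mem_ng] using ht)
        ⟨by linarith [h.2], by linarith [h.1]⟩, ?_⟩
    rcases h5 with ⟨h5, rfl⟩ | ⟨h5, rfl⟩
    · right
      refine ⟨fun p hp h => h5 _ ((mem_ng _ _).1 hp) ⟨by linarith [h.2], by linarith [h.1]⟩, ?_⟩
      simp only [ng_insert, ng_erase, if_true]
      rw [Finset.insert_comm, neg_add, sub_eq_add_neg]
    · left
      refine ⟨fun p hp h => h5 _ ((mem_ng _ _).1 hp) ⟨by linarith [h.2], by linarith [h.1]⟩, ?_⟩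
      simp only [ng_insert, ng_erase, if_true]
      rw [Finset.insert_comm, neg_sub', sub_neg_eq_add]
  · right
    refine ⟨-a, -y₂, -y₁, ε, h0, by linarith, by simpa [mem_ng] using h3,
      by simpa [mem_ng] using h2, fun t ht h => h4 (-t) (by simpa [mem_ng] using ht)
        ⟨by linarith [h.2], by linarith [h.1]⟩, ?_⟩
    rcases h5 with ⟨h5, rfl⟩ | ⟨h5, rfl⟩
    · right
      refine ⟨fun p hp h => h5 _ ((mem_ng _ _).1 hp) ⟨by linarith [h.2], by linarith [h.1]⟩, ?_⟩
      simp only [ng_insert, ng_erase, if_true]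
      rw [Finset.insert_comm, neg_add, sub_eq_add_neg]
    · left
      refine ⟨fun p hp h => h5 _ ((mem_ng _ _).1 hp) ⟨by linarith [h.2], by linarith [h.1]⟩, ?_⟩
      simp only [ng_insert, ng_erase, if_true]
      rw [Finset.insert_comm, neg_sub', sub_neg_eq_add]

def Concl (R R' : GRD) : Prop := ∃ S T U : GRD, EndShift true R S ∧
      Relation.ReflTransGen (fun A B : GRD => Commutation A B ∨ CombEquiv A B) S T ∧
      Stab true U T ∧ CombEquiv U R'

theorem concl_sw {R R' : GRD} (h : Concl (sw R) (sw R')) : Concl R R' := by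
  obtain ⟨S, T, U, h1, h2, h3, h4⟩ := h
  refine ⟨sw S, sw T, sw U, ?_, ?_, stab_sw h3, ?_⟩
  · simpa [sw_sw] using es_sw h1
  · clear h1 h3 h4
    induction h2 with
    | refl => exact .refl
    | tail _ h ih => exact ih.tail (h.imp comm_sw comb_sw)
  · simpa [sw_sw] using comb_sw h4

theorem concl_ng {R R' : GRD} (h : Concl (ng R) (ng R')) : Concl R R' := by
  obtain ⟨S, T, U, h1, h2, h3, h4⟩ := h
  refine ⟨ng S, ng T, ng U, ?_, ?_, stab_ng h3, ?_⟩
  · simpa [ng_ng] using es_ng h1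
  · clear h1 h3 h4
    induction h2 with
    | refl => exact .refl
    | tail _ h ih => exact ih.tail (h.imp comm_ng comb_ng)
  · simpa [ng_ng] using comb_ng h4

theorem comb_refl (A : GRD) : CombEquiv A A :=
  ⟨id, id, strictMono_id, strictMono_id, by simp⟩

theorem comb_trans {A B C : GRD} (h : CombEquiv A B) (h' : CombEquiv B C) : CombEquiv A C := by
  obtain ⟨f, g, hf, hg, rfl⟩ := h
  obtain ⟨f', g', hf', hg', rfl⟩ := h'
  exact ⟨f' ∘ f, g' ∘ g, hf'.comp hf, hg'.comp hg, by simp only [Finset.image_image]; rfl⟩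

theorem exists_below (F : Finset ℝ) (d : ℝ) : ∃ l < d, ∀ t ∈ F, t < d → t ≤ l := by
  by_cases h : (F.filter (· < d)).Nonempty
  · refine ⟨(F.filter (· < d)).max' h, ?_, fun t ht htd => Finset.le_max' _ _ (by simp [ht, htd])⟩
    have := Finset.max'_mem _ h
    exact (Finset.mem_filter.1 this).2
  · refine ⟨d - 1, by linarith, fun t ht htd => ?_⟩
    exact absurd ⟨t, by simp [ht, htd]⟩ h

theorem exists_above (F : Finset ℝ) (d : ℝ) : ∃ u > d, ∀ t ∈ F, d < t → u ≤ t := by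
  obtain ⟨l, h1, h2⟩ := exists_below (F.image (fun t => -t)) (-d)
  refine ⟨-l, by linarith, fun t ht h => ?_⟩
  have := h2 (-t) (Finset.mem_image_of_mem _ ht) (by linarith)
  linarith

theorem exists_mono (F : Finset ℝ) (d c : ℝ) (hdc : d < c) (hF : ∀ t ∈ F, ¬ (d < t ∧ t ≤ c)) :
    ∃ g : ℝ → ℝ, StrictMono g ∧ g c = d ∧ ∀ t ∈ F, t ≠ d → g t = t := by
  obtain ⟨l, hl, hl'⟩ := exists_below F d
  obtain ⟨u, hu, hu'⟩ := exists_above F c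
  have s1 : 0 < (d - l) / (c - l) := div_pos (by linarith) (by linarith)
  have s1' : (d - l) / (c - l) < 1 := by rw [div_lt_one] <;> linarith
  have e1 : (c - l) * ((d - l) / (c - l)) = d - l := by
    have : c - l ≠ 0 := by linarith
    field_simp
  have s2 : 1 < (u - d) / (u - c) := by rw [one_lt_div] <;> linarith
  have e2 : (u - c) * ((u - d) / (u - c)) = u - d := by
    have : u - c ≠ 0 := by linarith
    field_simp
  generalize (d - l) / (c - l) = s at *
  generalize (u - d) / (u - c) = r at *
  refine ⟨fun x => min x (max (l + (x - l) * s) (d + (x - c) * r)), ?_, ?_, ?_⟩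
  · intro x y h
    exact min_lt_min h (max_lt_max (by nlinarith) (by nlinarith))
  · simp only
    rw [max_eq_left (by nlinarith), min_eq_right (by nlinarith)]; linarith
  · intro t ht htd
    apply min_eq_left
    rcases lt_or_gt_of_ne htd with h | h
    · have := hl' t ht h
      apply le_max_of_le_left; nlinarith
    · have := hu' t ht (by by_contra h2; exact hF t ht ⟨h, not_lt.1 h2⟩)
      apply le_max_of_le_right; nlinarith

theorem comb_move (Q : GRD) (d c : ℝ) (hdc : d < c) (hQ : ∀ p ∈ Q, ¬ (d < p.2 ∧ p.2 ≤ c)) :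
    CombEquiv (moveRow Q d c) Q := by
  obtain ⟨g, hg, hgc, hg'⟩ := exists_mono (Q.image Prod.snd) d c hdc (by
    intro t ht
    obtain ⟨p, hp, rfl⟩ := Finset.mem_image.1 ht
    exact hQ p hp)
  refine ⟨id, g, strictMono_id, hg, ?_⟩
  rw [moveRow, Finset.image_image]
  conv_lhs => rw [← Finset.image_id (s := Q)]
  apply Finset.image_congr
  intro p hp
  simp only [Function.comp, id]
  split_ifs with h
  · ext <;> simp [hgc, h]
  · ext
    · rfl
    · exact (hg' _ (Finset.mem_image_of_mem _ hp) h).symm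

noncomputable def TT (Q : GRD) (a b y c : ℝ) : GRD :=
  insert (b, y) (insert (a, c) (insert (b, c) (Q.erase (a, y))))

theorem mem_moveRow (Q : GRD) (d c : ℝ) (hc : ∀ p ∈ Q, p.2 ≠ c) (hdc : d < c) (x y : ℝ) :
    (x, y) ∈ moveRow Q d c ↔ ((x, y) ∈ Q ∧ y ≠ d) ∨ (y = c ∧ (x, d) ∈ Q) := by
  simp only [moveRow, Finset.mem_image]
  constructor
  · rintro ⟨⟨p, q⟩, hp, h⟩
    split_ifs at h with h1
    · simp at h h1; obtain ⟨rfl, rfl⟩ := h; subst h1; exact Or.inr ⟨rfl, hp⟩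
    · simp at h h1; obtain ⟨rfl, rfl⟩ := h; exact Or.inl ⟨hp, h1⟩
  · rintro (⟨h1, h2⟩ | ⟨rfl, h⟩)
    · exact ⟨_, h1, by simp [h2]⟩
    · exact ⟨_, h, by simp⟩

theorem mem_swapRows (Q : GRD) (d c : ℝ) (x y : ℝ) :
    (x, y) ∈ swapRows Q d c ↔ (x, if y = d then c else if y = c then d else y) ∈ Q := by
  simp only [swapRows, Finset.mem_image]
  constructor
  · rintro ⟨⟨p, q⟩, hp, h⟩
    simp only at h
    split_ifs at h with h1 h2 <;> simp at h <;> obtain ⟨rfl, rfl⟩ := h <;> split_ifs <;> simp_all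
  · intro h
    refine ⟨_, h, ?_⟩
    split_ifs <;> simp_all

theorem main_aux (n : ℕ) : ∀ (Q : GRD) (a b y c : ℝ), a < b → y < c → (a, y) ∈ Q →
    (∀ p ∈ Q, ¬ (a < p.1 ∧ p.1 ≤ b)) → (∀ p ∈ Q, p.2 ≠ c) →
    (∀ t, (a, t) ∈ Q → ¬ (y < t ∧ t < c)) →
    ((Q.image Prod.snd).filter (fun t => y < t ∧ t < c)).card = n →
    ∃ T U : GRD,
      Relation.ReflTransGen (fun A B : GRD => Commutation A B ∨ CombEquiv A B) (TT Q a b y c) T ∧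
      Stab true U T ∧ CombEquiv U Q := by
  induction n with
  | zero =>
    intro Q a b y c hab hyc hay hcol hc ha hn
    refine ⟨_, Q, .refl, ⟨a, y, b, c, hay, by simp [hab, hyc], ?_, ?_, ?_, hc, rfl⟩, comb_refl _⟩
    · rintro p hp (h | h)
      · exact hcol p hp ⟨h.1, h.2.le⟩
      · linarith [h.1, h.2]
    · rintro p hp (h | h)
      · rw [Finset.card_eq_zero, Finset.filter_eq_empty_iff] at hn
        exact hn (Finset.mem_image_of_mem _ hp) h
      · linarith [h.1, h.2]
    · intro p hp h; exact hcol p hp ⟨by linarith, h.le⟩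
  | succ n ih =>
    intro Q a b y c hab hyc hay hcol hc ha hn
    have hne : ((Q.image Prod.snd).filter (fun t => y < t ∧ t < c)).Nonempty := by
      rw [← Finset.card_pos]; omega
    obtain ⟨d, hd, hmax⟩ : ∃ d ∈ (Q.image Prod.snd).filter (fun t => y < t ∧ t < c),
        ∀ t ∈ (Q.image Prod.snd).filter (fun t => y < t ∧ t < c), t ≤ d :=
      ⟨_, Finset.max'_mem _ hne, fun t ht => Finset.le_max' _ t ht⟩
    have hdd := hd
    rw [Finset.mem_filter] at hd
    obtain ⟨hdQ, hyd, hdc⟩ := hd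
    obtain ⟨⟨xd, d'⟩, hxd, hd'⟩ := Finset.mem_image.1 hdQ
    simp only at hd'; subst hd'
    have hgap : ∀ p ∈ Q, ¬ (d' < p.2 ∧ p.2 ≤ c) := by
      rintro p hp ⟨h1, h2⟩
      have := hmax p.2 (Finset.mem_filter.2 ⟨Finset.mem_image_of_mem _ hp, by linarith,
        lt_of_le_of_ne h2 (hc p hp)⟩)
      linarith
    have hm := mem_moveRow Q d' c hc hdc
    have hb : ∀ t, (b, t) ∉ Q := fun t ht => hcol _ ht ⟨hab, le_rfl⟩
    have had : (a, d') ∉ Q := fun h => ha _ h ⟨hyd, hdc⟩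
    obtain ⟨T, U, h1, h2, h3⟩ := ih (moveRow Q d' c) a b y d' hab hyd
      ((hm _ _).2 (Or.inl ⟨hay, hyd.ne⟩))
      (by
        rintro ⟨p, q⟩ hp
        rcases (hm _ _).1 hp with ⟨h, -⟩ | ⟨-, h⟩
        · exact hcol _ h
        · exact hcol (p, d') h)
      (by
        rintro ⟨p, q⟩ hp
        rcases (hm _ _).1 hp with ⟨-, h⟩ | ⟨h, -⟩
        · exact h
        · simp only; linarith)
      (by
        rintro t ht ⟨h4, h5⟩
        rcases (hm _ _).1 ht with ⟨h, -⟩ | ⟨-, h⟩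
        · exact ha _ h ⟨h4, by linarith⟩
        · exact had h)
      (by
        have : ((moveRow Q d' c).image Prod.snd).filter (fun t => y < t ∧ t < d') =
            ((Q.image Prod.snd).filter (fun t => y < t ∧ t < c)).erase d' := by
          ext t
          simp only [Finset.mem_filter, Finset.mem_image, Finset.mem_erase]
          constructor
          · rintro ⟨⟨⟨p, q⟩, hp, rfl⟩, h4, h5⟩
            simp only at h4 h5
            refine ⟨h5.ne, ?_, h4, by linarith⟩
            rcases (hm _ _).1 hp with ⟨h, -⟩ | ⟨h, -⟩
            · exact ⟨_, h, rfl⟩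
            · linarith
          · rintro ⟨h4, ⟨⟨p, q⟩, hp, rfl⟩, h5, h6⟩
            refine ⟨⟨(p, q), (hm _ _).2 (Or.inl ⟨hp, h4⟩), rfl⟩, h5, ?_⟩
            exact lt_of_le_of_ne (not_lt.1 fun h7 => hgap _ hp ⟨h7, h6.le⟩) h4
        rw [this, Finset.card_erase_of_mem hdd]; omega)
    refine ⟨T, U, .head (Or.inl ?_) h1, h2, comb_trans h3 (comb_move Q d' c hdc hgap)⟩
    have hxda : xd ≠ a := by rintro rfl; exact had hxd
    have hrowc : ∀ x, (x, c) ∈ TT Q a b y c → x = a ∨ x = b := by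
      intro x hx
      simp only [TT, Finset.mem_insert, Prod.mk.injEq, Finset.mem_erase] at hx
      rcases hx with h | h | h | h
      · exact Or.inr h.1
      · exact Or.inl h.1
      · exact Or.inr h.1
      · exact absurd rfl (hc _ h.2)
    have hrowd : ∀ x, (x, d') ∈ TT Q a b y c → (x, d') ∈ Q := by
      intro x hx
      simp only [TT, Finset.mem_insert, Prod.mk.injEq, Finset.mem_erase] at hx
      rcases hx with h | h | h | h
      · linarith [h.2]
      · linarith [h.2]
      · linarith [h.2]
      · exact h.2
    have hdab : ∀ x, (x, d') ∈ TT Q a b y c → ¬ (a < x ∧ x < b) := fun x hx h =>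
      hcol _ (hrowd x hx) ⟨h.1, h.2.le⟩
    right
    refine ⟨d', c, hdc, ⟨(xd, d'), by simp [TT, hxd, hxda], rfl⟩, ⟨(a, c), by simp [TT], rfl⟩,
      ?_, ?_, ?_⟩
    · rintro p hp ⟨h4, h5⟩
      simp only [TT, Finset.mem_insert, Finset.mem_erase] at hp
      rcases hp with rfl | rfl | rfl | h
      · simp only at h4; linarith
      · simp only at h5; linarith
      · simp only at h5; linarith
      · exact hgap _ h.2 ⟨h4, h5.le⟩
    · rintro (⟨p, hp, q, hq, r, hr, s, hs, l1, l2, l3⟩ | ⟨q, hq, r, hr, s, hs, p, hp, l1, l2, l3⟩)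
      · apply hdab r hr
        rcases hrowc q hq with rfl | rfl <;> rcases hrowc s hs with rfl | rfl <;>
          constructor <;> linarith
      · apply hdab r hr
        rcases hrowc q hq with rfl | rfl <;> rcases hrowc s hs with rfl | rfl <;>
          constructor <;> linarith
    · ext ⟨p, q⟩
      rw [mem_swapRows]
      simp only [TT, Finset.mem_insert, Finset.mem_erase, hm, Prod.mk.injEq, ne_eq]
      have hcc : ∀ x, (x, c) ∉ Q := fun x hx => hc _ hx rfl
      by_cases q1 : q = d'
      · subst q1
        simp [hcc, hdc.ne, hyd.ne', hyc.ne']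
      · by_cases q2 : q = c
        · subst q2
          simp [hcc, hdc.ne, hdc.ne', hyd.ne', hyc.ne']
        · simp [q1, q2]

theorem base (R' R : GRD) (a y₁ y₂ ε : ℝ) (h0 : 0 < ε) (h1 : y₁ < y₂) (h2 : (a, y₁) ∈ R')
    (h3 : (a, y₂) ∈ R') (h4 : ∀ t : ℝ, (a, t) ∈ R' → ¬ (y₁ < t ∧ t < y₂))
    (h5 : ∀ p ∈ R', ¬ (a < p.1 ∧ p.1 ≤ a + ε))
    (h6 : R = insert (a + ε, y₁) (insert (a + ε, y₂) (R'.erase (a, y₁)))) : Concl R R' := by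
  obtain ⟨l, hl, hl'⟩ := exists_below (R.image Prod.snd) y₂
  have hrow : ∀ p ∈ R, p.2 < y₂ → p.2 ≤ l := fun p hp =>
    hl' _ (Finset.mem_image_of_mem _ hp)
  have hy1l : y₁ ≤ l := hrow (a + ε, y₁) (by simp [h6]) h1
  obtain ⟨c, hlc, hcy⟩ := exists_between hl
  have hb : ∀ t, (a + ε, t) ∉ R' := fun t ht => h5 _ ht ⟨by simp only; linarith, le_rfl⟩
  have hrow' : ∀ p ∈ R', p.2 < y₂ → p.2 ≤ l := by
    intro p hp h
    by_cases hpa : p = (a, y₁)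
    · rw [hpa]; exact hy1l
    · exact hrow p (by simp [h6, hp, hpa]) h
  obtain ⟨T, U, k1, k2, k3⟩ := main_aux _ R' a (a + ε) y₁ c (by linarith) (by linarith) h2 h5
    (fun p hp h => by have := hrow' p hp (by linarith); linarith)
    (fun t ht h => h4 t ht ⟨h.1, by linarith [h.2]⟩) rfl
  refine ⟨_, T, U, Or.inr ⟨y₂, a, a + ε, y₂ - c, by linarith, by linarith, ?_, ?_, ?_,
    Or.inr ⟨?_, rfl⟩⟩, ?_, k2, k3⟩
  · simp [h6, h3, h1.ne']
  · simp [h6]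
  · rintro t ht ⟨l1, l2⟩
    simp only [h6, Finset.mem_insert, Finset.mem_erase, Prod.mk.injEq] at ht
    rcases ht with h | h | h
    · linarith [h.1]
    · linarith [h.1]
    · exact h5 _ h.2 ⟨l1, l2.le⟩
  · rintro p hp ⟨l1, l2⟩
    have := hrow p hp l2
    linarith
  · convert k1 using 1
    simp only [sub_sub_cancel, if_true, h6]
    ext ⟨p, q⟩
    simp only [TT, Finset.mem_insert, Finset.mem_erase, Prod.mk.injEq, ne_eq]
    by_cases p1 : p = a + ε
    · subst p1
      by_cases q1 : q = y₂
      · subst q1; simp [hb, h1.ne', hcy.ne']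
      · simp [hb, q1, or_comm, h0.ne']
    · simp [p1]

theorem vert (R R' : GRD) (h : ∃ a y₁ y₂ ε : ℝ, 0 < ε ∧ y₁ < y₂ ∧ (a, y₁) ∈ R' ∧ (a, y₂) ∈ R' ∧
    (∀ t : ℝ, (a, t) ∈ R' → ¬ (y₁ < t ∧ t < y₂)) ∧
    (((∀ p ∈ R', ¬ (a < p.1 ∧ p.1 ≤ a + ε)) ∧
       R = insert (a + ε, y₁) (insert (a + ε, y₂)
         (R'.erase (a, y₁)))) ∨
     ((∀ p ∈ R', ¬ (a - ε ≤ p.1 ∧ p.1 < a)) ∧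
       R = insert (a - ε, y₁) (insert (a - ε, y₂)
         (R'.erase (a, y₂)))))) : Concl R R' := by
  obtain ⟨a, y₁, y₂, ε, h0, h1, h2, h3, h4, h5⟩ := h
  rcases h5 with ⟨h5, h6⟩ | ⟨h5, h6⟩
  · exact base R' R a y₁ y₂ ε h0 h1 h2 h3 h4 h5 h6
  · apply concl_ng
    refine base (ng R') (ng R) (-a) (-y₂) (-y₁) ε h0 (by linarith) (by simpa [mem_ng] using h3)
      (by simpa [mem_ng] using h2) (fun t ht h => h4 (-t) (by simpa [mem_ng] using ht)
        ⟨by linarith [h.2], by linarith [h.1]⟩)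
      (fun p hp h => h5 _ ((mem_ng _ _).1 hp) ⟨by linarith [h.2], by linarith [h.1]⟩) ?_
    rw [h6]
    simp only [ng_insert, ng_erase]
    rw [Finset.insert_comm, neg_sub', sub_neg_eq_add]

/-- the inverse of an end shift of type L is a combination of one end
shift of type L, finitely many commutations, and one destabilization of type L. -/
theorem statement6 (R R' : GRD) (h : EndShift true R' R) :
    ∃ S T U : GRD, EndShift true R S ∧
      Relation.ReflTransGen (fun A B : GRD => Commutation A B ∨ CombEquiv A B) S T ∧
      Stab true U T ∧ CombEquiv U R' := by
  rcases h with h | h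
  · exact vert R R' (by simpa using h)
  · apply concl_sw
    apply vert
    obtain ⟨a, y₁, y₂, ε, h0, h1, h2, h3, h4, h5⟩ := h
    refine ⟨a, y₁, y₂, ε, h0, h1, by simpa [mem_sw] using h2, by simpa [mem_sw] using h3,
      fun t ht => h4 t (by simpa [mem_sw] using ht), ?_⟩
    rcases h5 with ⟨h5, rfl⟩ | ⟨h5, rfl⟩
    · left; exact ⟨fun p hp => h5 _ ((mem_sw _ _).1 hp), by simp [sw_insert, sw_erase]⟩
    · right; exact ⟨fun p hp => h5 _ ((mem_sw _ _).1 hp), by simp [sw_insert, sw_erase]⟩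

end RectDiag
end

section
/- If a generalized rectangular diagram R' is obtained from a generalized rectangular diagram R by an end shift of type L, then R' can be obtained from R by a finite sequence consisting of one vertex addition and one flype of type L. -/
namespace RectDiag

lemma margin_aux (T : GRD) (a b c d : ℝ) : ∃ δ : ℝ, 0 < δ ∧ ∀ p ∈ T,
    (a - δ < p.1 → a ≤ p.1) ∧ (p.1 < b + δ → p.1 ≤ b) ∧
    (c - δ < p.2 → c ≤ p.2) ∧ (p.2 < d + δ → p.2 ≤ d) := by
  have key : ∀ u v : ℝ, ∃ δ : ℝ, 0 < δ ∧ ∀ e, e ≤ δ → (v - e < u → v ≤ u) ∧ (u < v + e → u ≤ v) := by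
    intro u v
    by_cases h : u = v
    · subst h
      exact ⟨1, one_pos, fun e _ => ⟨fun _ => le_refl _, fun _ => le_refl _⟩⟩
    · refine ⟨|u - v|, abs_pos.mpr (sub_ne_zero.mpr h), fun e he => ⟨fun h1 => ?_, fun h1 => ?_⟩⟩
      · by_contra hc
        rw [abs_of_neg (by linarith)] at he
        linarith
      · by_contra hc
        rw [abs_of_pos (by linarith)] at he
        linarith
  suffices H : ∃ δ : ℝ, 0 < δ ∧ ∀ p ∈ T, ∀ e, e ≤ δ →
    (a - e < p.1 → a ≤ p.1) ∧ (p.1 < b + e → p.1 ≤ b) ∧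
    (c - e < p.2 → c ≤ p.2) ∧ (p.2 < d + e → p.2 ≤ d) by
    obtain ⟨δ, h0, h⟩ := H
    exact ⟨δ, h0, fun p hp => h p hp δ le_rfl⟩
  induction T using Finset.induction_on with
  | empty => exact ⟨1, one_pos, by simp⟩
  | insert q T _ ih =>
    obtain ⟨δ, h0, h⟩ := ih
    obtain ⟨δ1, h1, k1⟩ := key q.1 a
    obtain ⟨δ2, h2, k2⟩ := key q.1 b
    obtain ⟨δ3, h3, k3⟩ := key q.2 c
    obtain ⟨δ4, h4, k4⟩ := key q.2 d
    refine ⟨min δ (min (min δ1 δ2) (min δ3 δ4)), by positivity, ?_⟩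
    intro p hp e he
    simp only [le_min_iff] at he
    rcases Finset.mem_insert.mp hp with rfl | hp
    · exact ⟨(k1 e he.2.1.1).1, (k2 e he.2.1.2).2, (k3 e he.2.2.1).1, (k4 e he.2.2.2).2⟩
    · exact h p hp e he.1

lemma flype_aux (T : GRD) (a b c d : ℝ) (hab : a < b) (hcd : c < d)
    (h1 : (a, c) ∈ T) (h2 : (a, d) ∈ T) (h3 : (b, c) ∈ T)
    (hT : ∀ p ∈ T, a ≤ p.1 → p.1 ≤ b → c ≤ p.2 → p.2 ≤ d →
      p = (a, c) ∨ p = (a, d) ∨ p = (b, c)) :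
    FlypeLOnce T (insert (b, d) (T.erase (a, c))) := by
  obtain ⟨δ, h0, hδ⟩ := margin_aux T a b c d
  have U : ∀ p ∈ T, a - δ < p.1 → p.1 < b + δ → c - δ < p.2 → p.2 < d + δ →
      p = (a, c) ∨ p = (a, d) ∨ p = (b, c) := by
    intro p hp e1 e2 e3 e4
    obtain ⟨k1, k2, k3, k4⟩ := hδ p hp
    exact hT p hp (k1 e1) (k2 e2) (k3 e3) (k4 e4)
  refine ⟨a - δ, (a + b) / 2, b + δ, c - δ, (c + d) / 2, d + δ, by linarith, by linarith,
    by linarith, by linarith, ?_, ?_, ?_,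
    fun p => if p = (a, c) then (b, d) else p, ?_, ?_, ?_⟩
  · rintro p hp ⟨e1, e2, e3, e4⟩
    rcases U p hp (by linarith) e2 (by linarith) e4 with rfl | rfl | rfl <;>
      simp only at e1 e2 e3 e4 <;> linarith
  · rintro p hp q hq ⟨e1, e2, e3, e4⟩ ⟨f1, f2, f3, f4⟩ hl
    rcases U p hp (by linarith) (by linarith) (by linarith) e4 with rfl | rfl | rfl <;>
    rcases U q hq (by linarith) (by linarith) (by linarith) f4 with rfl | rfl | rfl <;>
      simp only at * <;> linarith
  · rintro p hp q hq ⟨e1, e2, e3, e4⟩ ⟨f1, f2, f3, f4⟩ hl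
    rcases U p hp (by linarith) (by linarith) (by linarith) (by linarith) with rfl | rfl | rfl <;>
    rcases U q hq (by linarith) (by linarith) (by linarith) (by linarith) with rfl | rfl | rfl <;>
      simp only at * <;> linarith
  · intro p hp hn
    refine if_neg ?_
    rintro rfl
    exact hn ⟨by simp only; linarith, by simp only; linarith, by simp only; linarith,
      by simp only; linarith⟩
  · rintro p hp ⟨e1, e2, e3, e4⟩
    rcases U p hp (by linarith) (by linarith) (by linarith) (by linarith) with rfl | rfl | rfl
    · refine ⟨(a, d), h2, (b, c), h3, ⟨?_, ?_, ?_, ?_⟩, rfl, ⟨?_, ?_, ?_, ?_⟩, rfl, if_pos rfl⟩ <;>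
        simp only <;> linarith
    · simp only at *
      linarith
    · simp only at *
      linarith
  · ext p
    simp only [Finset.mem_insert, Finset.mem_erase, Finset.mem_image]
    constructor
    · rintro (rfl | ⟨hp, hp'⟩)
      · exact ⟨_, h1, if_pos rfl⟩
      · exact ⟨p, hp', if_neg hp⟩
    · rintro ⟨q, hq, rfl⟩
      by_cases hqc : q = (a, c)
      · left
        exact if_pos hqc
      · right
        rw [if_neg hqc]
        exact ⟨hqc, hq⟩

lemma combEquiv_refl (R : GRD) : CombEquiv R R :=
  ⟨id, id, strictMono_id, strictMono_id, by simp⟩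

/-- an end shift of type L is a combination of one vertex addition and
one flype of type L. -/
theorem statement9 (R R' : GRD) (h : EndShift true R R') :
    ∃ S T : GRD, VertexAddition R S ∧ FlypeL S T ∧ CombEquiv T R' := by
  rcases h with ⟨a, y₁, y₂, ε, hε, hy, m1, m2, hadj, ⟨hf, hR⟩ | ⟨hf, hR⟩⟩ |
    ⟨a, x₁, x₂, ε, hε, hx, m1, m2, hadj, ⟨hf, hR⟩ | ⟨hf, hR⟩⟩
  · have hfr : ∀ w ∈ R, w.1 ≠ a + ε := fun w hw he => hf w hw ⟨by linarith, by linarith⟩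
    refine ⟨insert (a + ε, y₁) R, R', ⟨(a + ε, y₁), fun hm => hfr _ hm rfl, rfl,
      Or.inr ⟨⟨_, m1, rfl⟩, hfr⟩⟩, Or.inl ?_, combEquiv_refl _⟩
    have := flype_aux (insert (a + ε, y₁) R) a (a + ε) y₁ y₂ (by linarith) hy
      (by simp [m1]) (by simp [m2]) (by simp) ?_
    · convert this using 1
      rw [hR]
      ext ⟨p, q⟩
      simp only [Finset.mem_insert, Finset.mem_erase, Prod.mk.injEq, if_true, ne_eq]
      grind
    · rintro ⟨p, q⟩ hp e1 e2 e3 e4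
      simp only [Finset.mem_insert, Prod.mk.injEq] at *
      rcases hp with hp | hp
      · tauto
      · have := hf _ hp
        have : p = a := by grind
        subst this
        have := hadj _ hp
        grind
  · have hfr : ∀ w ∈ R, w.1 ≠ a - ε := fun w hw he => hf w hw ⟨by linarith, by linarith⟩
    refine ⟨insert (a - ε, y₂) R, R', ⟨(a - ε, y₂), fun hm => hfr _ hm rfl, rfl,
      Or.inr ⟨⟨_, m2, rfl⟩, hfr⟩⟩, Or.inr ?_, combEquiv_refl _⟩
    have hn := fun t (ht : (a - ε, t) ∈ R) => hfr _ ht rfl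
    have := flype_aux R' (a - ε) a y₁ y₂ (by linarith) hy
      (by simp [hR]) (by simp [hR]) (by simp [hR, m1, hy.ne]) ?_
    · convert this using 1
      rw [hR]
      ext ⟨p, q⟩
      simp only [Finset.mem_insert, Finset.mem_erase, Prod.mk.injEq, if_true, ne_eq]
      grind
    · rintro ⟨p, q⟩ hp e1 e2 e3 e4
      simp only [hR, Finset.mem_insert, Finset.mem_erase, Prod.mk.injEq, if_true, ne_eq] at *
      rcases hp with hp | hp | ⟨hp', hp⟩
      · tauto
      · tauto
      · have := hf _ hp
        have : p = a := by grind
        subst this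
        have := hadj _ hp
        grind
  · have hfr : ∀ w ∈ R, w.2 ≠ a + ε := fun w hw he => hf w hw ⟨by linarith, by linarith⟩
    refine ⟨insert (x₁, a + ε) R, R', ⟨(x₁, a + ε), fun hm => hfr _ hm rfl, rfl,
      Or.inl ⟨⟨_, m1, rfl⟩, hfr⟩⟩, Or.inl ?_, combEquiv_refl _⟩
    have := flype_aux (insert (x₁, a + ε) R) x₁ x₂ a (a + ε) hx (by linarith)
      (by simp [m1]) (by simp) (by simp [m2]) ?_
    · convert this using 1
      rw [hR]
      ext ⟨p, q⟩
      simp only [Finset.mem_insert, Finset.mem_erase, Prod.mk.injEq, if_true, ne_eq]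
      grind
    · rintro ⟨p, q⟩ hp e1 e2 e3 e4
      simp only [Finset.mem_insert, Prod.mk.injEq] at *
      rcases hp with hp | hp
      · tauto
      · have := hf _ hp
        have : q = a := by grind
        subst this
        have := hadj _ hp
        grind
  · have hfr : ∀ w ∈ R, w.2 ≠ a - ε := fun w hw he => hf w hw ⟨by linarith, by linarith⟩
    refine ⟨insert (x₂, a - ε) R, R', ⟨(x₂, a - ε), fun hm => hfr _ hm rfl, rfl,
      Or.inl ⟨⟨_, m2, rfl⟩, hfr⟩⟩, Or.inr ?_, combEquiv_refl _⟩
    have hn := fun t (ht : (t, a - ε) ∈ R) => hfr _ ht rfl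
    have := flype_aux R' x₁ x₂ (a - ε) a hx (by linarith)
      (by simp [hR]) (by simp [hR, m1, hx.ne]) (by simp [hR]) ?_
    · convert this using 1
      rw [hR]
      ext ⟨p, q⟩
      simp only [Finset.mem_insert, Finset.mem_erase, Prod.mk.injEq, if_true, ne_eq]
      grind
    · rintro ⟨p, q⟩ hp e1 e2 e3 e4
      simp only [hR, Finset.mem_insert, Finset.mem_erase, Prod.mk.injEq, if_true, ne_eq] at *
      rcases hp with hp | hp | ⟨hp', hp⟩
      · tauto
      · tauto
      · have := hf _ hp
        have : q = a := by grind
        subst this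
        have := hadj _ hp
        grind

end RectDiag
end

section
/- If a generalized rectangular diagram R' is obtained from a generalized rectangular diagram R by a stabilization of type L, then R' can be obtained from R by a finite sequence consisting of two vertex additions and one flype of type L. -/
namespace RectDiag

lemma gap (F : Finset ℝ) (u : ℝ) : ∃ e > 0, ∀ t ∈ F, u - e < t → t < u + e → t = u := by
  induction F using Finset.induction_on with
  | empty => exact ⟨1, one_pos, by simp⟩
  | insert s F hs ih =>
    obtain ⟨e, he, h⟩ := ih
    by_cases hsu : s = u
    · refine ⟨e, he, fun t ht h1 h2 => ?_⟩
      rcases Finset.mem_insert.1 ht with rfl | ht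
      · exact hsu
      · exact h t ht h1 h2
    · refine ⟨min e |s - u|, lt_min he (abs_pos.2 (sub_ne_zero.2 hsu)), fun t ht h1 h2 => ?_⟩
      have h3 := min_le_left e |s - u|
      have h4 := min_le_right e |s - u|
      rcases Finset.mem_insert.1 ht with rfl | ht
      · exfalso
        have : |t - u| < |t - u| := abs_lt.2 ⟨by linarith, by linarith⟩
        exact lt_irrefl _ this
      · exact h t ht (by linarith) (by linarith)

lemma flype_aux_s10 (B : GRD) (a a' b b' x₀ x₂ y₀ y₂ : ℝ) (ha : a < a') (hb : b < b')
    (h0 : x₀ < a) (h2 : a' < x₂) (k0 : y₀ < b) (k2 : b' < y₂)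
    (hB : ∀ p ∈ B, ¬ inRect x₀ x₂ y₀ y₂ p) :
    FlypeLOnce (insert (a, b) (insert (a, b') (insert (a', b) B)))
      (insert (a', b') (insert (a, b') (insert (a', b) B))) := by
  obtain ⟨x₁, hx1, hx2⟩ := exists_between ha
  obtain ⟨y₁, hy1, hy2⟩ := exists_between hb
  have hab : (a, b) ∉ B := fun h => hB _ h ⟨h0, by simp; linarith, k0, by simp; linarith⟩
  have key : ∀ p ∈ insert (a, b) (insert (a, b') (insert (a', b) B)),
      inRect x₀ x₂ y₀ y₂ p → p = (a, b) ∨ p = (a, b') ∨ p = (a', b) := by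
    intro p hp hr
    simp only [Finset.mem_insert] at hp
    rcases hp with h | h | h | h
    · exact Or.inl h
    · exact Or.inr (Or.inl h)
    · exact Or.inr (Or.inr h)
    · exact absurd hr (hB p h)
  refine ⟨x₀, x₁, x₂, y₀, y₁, y₂, by linarith, by linarith, by linarith, by linarith,
    ?_, ?_, ?_, fun p => if p = (a, b) then (a', b') else p, ?_, ?_, ?_⟩
  · rintro p hp ⟨r1, r2, r3, r4⟩
    rcases key p hp ⟨by linarith, by linarith, by linarith, by linarith⟩ with rfl | rfl | rfl <;>
      simp only at r1 r2 r3 r4 <;> linarith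
  · rintro p hp q hq ⟨r1, r2, r3, r4⟩ ⟨s1, s2, s3, s4⟩ hpq
    rcases key p hp ⟨by linarith, by linarith, by linarith, by linarith⟩ with rfl | rfl | rfl <;>
    rcases key q hq ⟨by linarith, by linarith, by linarith, by linarith⟩ with rfl | rfl | rfl <;>
      simp only at * <;> linarith
  · rintro p hp q hq ⟨r1, r2, r3, r4⟩ ⟨s1, s2, s3, s4⟩ hpq
    rcases key p hp ⟨by linarith, by linarith, by linarith, by linarith⟩ with rfl | rfl | rfl <;>
    rcases key q hq ⟨by linarith, by linarith, by linarith, by linarith⟩ with rfl | rfl | rfl <;>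
      simp only at * <;> linarith
  · intro p hp hn
    have : p ≠ (a, b) := by
      rintro rfl
      exact hn ⟨h0, hx1, k0, hy1⟩
    simp [this]
  · rintro p hp ⟨r1, r2, r3, r4⟩
    have hpe : p = (a, b) := by
      rcases key p hp ⟨by linarith, by linarith, by linarith, by linarith⟩ with rfl | rfl | rfl
      · rfl
      · simp only at r1 r2 r3 r4; linarith
      · simp only at r1 r2 r3 r4; linarith
    subst hpe
    exact ⟨(a, b'), by simp, (a', b), by simp, ⟨h0, hx1, hy2, k2⟩, rfl, ⟨hx2, h2, k0, hy1⟩, rfl,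
      by simp⟩
  · have hBi : B.image (fun p => if p = (a, b) then (a', b') else p) = B := by
      conv_rhs => rw [← Finset.image_id (s := B)]
      apply Finset.image_congr
      intro p hp
      have : p ≠ (a, b) := by
        rintro rfl
        exact hab hp
      simp [this]
    rw [Finset.image_insert, Finset.image_insert, Finset.image_insert, hBi]
    simp [hb.ne', ha.ne']

lemma gap_box (R : GRD) (x y x' y' : ℝ)
    (hx : ∀ p ∈ R, ¬ strictlyBetween x p.1 x') (hy : ∀ p ∈ R, ¬ strictlyBetween y p.2 y')
    (nx : ∀ p ∈ R, p.1 ≠ x') (ny : ∀ p ∈ R, p.2 ≠ y') :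
    ∃ e > 0, ∀ p ∈ R.erase (x, y),
      ¬ inRect (min x x' - e) (max x x' + e) (min y y' - e) (max y y' + e) p := by
  obtain ⟨e1, p1, g1⟩ := gap (R.image Prod.fst) x
  obtain ⟨e2, p2, g2⟩ := gap (R.image Prod.fst) x'
  obtain ⟨e3, p3, g3⟩ := gap (R.image Prod.snd) y
  obtain ⟨e4, p4, g4⟩ := gap (R.image Prod.snd) y'
  have aux : ∀ (u u' t d1 d2 e : ℝ), 0 < d1 → 0 < d2 → e ≤ d1 → e ≤ d2 →
      (u - d1 < t → t < u + d1 → t = u) → (u' - d2 < t → t < u' + d2 → t = u') →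
      ¬ strictlyBetween u t u' → t ≠ u' → min u u' - e < t → t < max u u' + e → t = u := by
    intro u u' t d1 d2 e q1 q2 l1 l2 f1 f2 hb hn m1 m2
    by_contra hne
    have hlo : ¬ (u - d1 < t ∧ t < u + d1) := fun h => hne (f1 h.1 h.2)
    have hlo' : ¬ (u' - d2 < t ∧ t < u' + d2) := fun h => hn (f2 h.1 h.2)
    unfold strictlyBetween at hb
    grind
  refine ⟨min (min e1 e2) (min e3 e4), by positivity, ?_⟩
  rintro p hp ⟨r1, r2, r3, r4⟩
  obtain ⟨hne, hp⟩ := Finset.mem_erase.1 hp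
  apply hne
  ext
  · exact aux x x' p.1 e1 e2 _ p1 p2 (by simp) (by simp)
      (g1 _ (Finset.mem_image_of_mem _ hp)) (g2 _ (Finset.mem_image_of_mem _ hp))
      (hx p hp) (nx p hp) r1 r2
  · exact aux y y' p.2 e3 e4 _ p3 p4 (by simp) (by simp)
      (g3 _ (Finset.mem_image_of_mem _ hp)) (g4 _ (Finset.mem_image_of_mem _ hp))
      (hy p hp) (ny p hp) r3 r4

/-- a stabilization of type L is a combination of two vertex additions
and one flype of type L. -/
theorem statement10 (R R' : GRD) (h : Stab true R R') :
    ∃ S T U : GRD, VertexAddition R S ∧ VertexAddition S T ∧ FlypeL T U ∧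
      CombEquiv U R' := by
  obtain ⟨x, y, x', y', hR, hor, hx, hy, nx, ny, rfl⟩ := h
  obtain ⟨e, he, hbox⟩ := gap_box R x y x' y' hx hy nx ny
  simp only [if_true] at hor
  have hyy : y ≠ y' := ny _ hR
  have hxx : x ≠ x' := nx _ hR
  have hT : insert (x', y) (insert (x, y') R) =
      insert (x, y) (insert (x, y') (insert (x', y) (R.erase (x, y)))) := by
    conv_lhs => rw [← Finset.insert_erase hR]
    ext p
    simp only [Finset.mem_insert]
    tauto
  have hU : insert (x', y) (insert (x, y') (insert (x', y') (R.erase (x, y)))) =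
      insert (x', y') (insert (x, y') (insert (x', y) (R.erase (x, y)))) := by
    ext p
    simp only [Finset.mem_insert]
    tauto
  refine ⟨insert (x, y') R, insert (x', y) (insert (x, y') R), _, ?_, ?_, ?_,
    id, id, strictMono_id, strictMono_id, by simp; rfl⟩
  · exact ⟨(x, y'), fun h => ny _ h rfl, rfl, Or.inl ⟨⟨_, hR, rfl⟩, ny⟩⟩
  · refine ⟨(x', y), ?_, rfl, Or.inr ⟨⟨_, Finset.mem_insert_of_mem hR, rfl⟩, ?_⟩⟩
    · intro h
      rcases Finset.mem_insert.1 h with h | h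
      · exact hxx (congrArg Prod.fst h).symm
      · exact nx _ h rfl
    · intro w hw
      rcases Finset.mem_insert.1 hw with rfl | h
      · exact hxx
      · exact nx _ h
  · rw [hT, hU]
    rcases hor with ⟨h1, h2⟩ | ⟨h1, h2⟩
    · left
      rw [min_eq_left h1.le, min_eq_left h2.le, max_eq_right h1.le, max_eq_right h2.le] at hbox
      exact flype_aux_s10 _ _ _ _ _ _ _ _ _ h1 h2 (by linarith) (by linarith) (by linarith)
        (by linarith) hbox
    · right
      rw [min_eq_right h1.le, min_eq_right h2.le, max_eq_left h1.le, max_eq_left h2.le] at hbox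
      have := flype_aux_s10 _ _ _ _ _ _ _ _ _ h1 h2 (by linarith) (by linarith) (by linarith)
        (by linarith) hbox
      rwa [Finset.insert_comm (x', y) (x, y')] at this

end RectDiag
end

section
/- For every generalized rectangular diagram R, the diagram obtained from R by reflection in the line x = y can be obtained from R by a finite sequence of elementary moves of type L. -/
namespace RectDiag

/-- Reflection in the diagonal. -/
noncomputable def tr (R : GRD) : GRD := R.image fun p => (p.2, p.1)

theorem mem_tr {R : GRD} {p : ℝ × ℝ} : p ∈ tr R ↔ (p.2, p.1) ∈ R := by
  unfold tr
  rw [Finset.mem_image]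
  constructor
  · rintro ⟨q, hq, rfl⟩; exact hq
  · intro h; exact ⟨_, h, rfl⟩

theorem tr_tr (R : GRD) : tr (tr R) = R := by
  ext p; simp [mem_tr]

theorem tr_insert (v : ℝ × ℝ) (R : GRD) : tr (insert v R) = insert (v.2, v.1) (tr R) := by
  unfold tr; rw [Finset.image_insert]

/-- Reachability of both the diagrams and their reflections. -/
def Good (R R' : GRD) : Prop :=
  Relation.ReflTransGen (Step true) R R' ∧ Relation.ReflTransGen (Step true) (tr R) (tr R')

theorem Good.trans {A B C : GRD} (h : Good A B) (h' : Good B C) : Good A C :=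
  ⟨h.1.trans h'.1, h.2.trans h'.2⟩

theorem Good.refl (A : GRD) : Good A A := ⟨.refl, .refl⟩

theorem Good.tr {A B : GRD} (h : Good A B) : Good (tr A) (tr B) :=
  ⟨h.2, by rw [tr_tr, tr_tr]; exact h.1⟩

theorem good_of {A B : GRD} (h : Step true A B) (h' : Step true (tr A) (tr B)) : Good A B :=
  ⟨.single h, .single h'⟩

theorem gap_right (S : Finset ℝ) {a b : ℝ} (h : a < b) :
    ∃ e, a < e ∧ e < b ∧ ∀ s ∈ S, ¬ (a < s ∧ s ≤ e) := by
  obtain ⟨m, hm, hmin⟩ := Finset.exists_min_image (insert b (S.filter (fun s => a < s))) id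
    ⟨b, Finset.mem_insert_self _ _⟩
  have ham : a < m := by
    rcases Finset.mem_insert.1 hm with rfl | hm
    · exact h
    · exact (Finset.mem_filter.1 hm).2
  have hmb : m ≤ b := hmin b (Finset.mem_insert_self _ _)
  refine ⟨(a + m) / 2, by linarith, by linarith, ?_⟩
  rintro s hs ⟨h1, h2⟩
  have : m ≤ s := hmin s (Finset.mem_insert_of_mem (Finset.mem_filter.2 ⟨hs, h1⟩))
  linarith

theorem gap_left (S : Finset ℝ) {a b : ℝ} (h : a < b) :
    ∃ e, a < e ∧ e < b ∧ ∀ s ∈ S, ¬ (e ≤ s ∧ s < b) := by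
  obtain ⟨e, h1, h2, h3⟩ := gap_right (S.image (fun x => -x)) (neg_lt_neg h)
  refine ⟨-e, by linarith, by linarith, ?_⟩
  rintro s hs ⟨h4, h5⟩
  exact h3 (-s) (Finset.mem_image_of_mem _ hs) ⟨by linarith, by linarith⟩

theorem gap_right' (R : GRD) {a b : ℝ} (h : a < b) :
    ∃ e, a < e ∧ e < b ∧ ∀ p ∈ R, ¬ (a < p.1 ∧ p.1 ≤ e) := by
  obtain ⟨e, h1, h2, h3⟩ := gap_right (R.image Prod.fst) h
  exact ⟨e, h1, h2, fun p hp => h3 p.1 (Finset.mem_image_of_mem _ hp)⟩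

theorem gap_left' (R : GRD) {a b : ℝ} (h : a < b) :
    ∃ e, a < e ∧ e < b ∧ ∀ p ∈ R, ¬ (e ≤ p.1 ∧ p.1 < b) := by
  obtain ⟨e, h1, h2, h3⟩ := gap_left (R.image Prod.fst) h
  exact ⟨e, h1, h2, fun p hp => h3 p.1 (Finset.mem_image_of_mem _ hp)⟩

theorem gap_right2 (R : GRD) {a b : ℝ} (h : a < b) :
    ∃ e, a < e ∧ e < b ∧ ∀ p ∈ R, ¬ (a < p.2 ∧ p.2 ≤ e) := by
  obtain ⟨e, h1, h2, h3⟩ := gap_right (R.image Prod.snd) h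
  exact ⟨e, h1, h2, fun p hp => h3 p.2 (Finset.mem_image_of_mem _ hp)⟩

theorem gap_left2 (R : GRD) {a b : ℝ} (h : a < b) :
    ∃ e, a < e ∧ e < b ∧ ∀ p ∈ R, ¬ (e ≤ p.2 ∧ p.2 < b) := by
  obtain ⟨e, h1, h2, h3⟩ := gap_left (R.image Prod.snd) h
  exact ⟨e, h1, h2, fun p hp => h3 p.2 (Finset.mem_image_of_mem _ hp)⟩

theorem exists_strictMono {l c d u : ℝ} (h1 : l < c) (h2 : c < d) (h3 : d < u) :
    ∃ f : ℝ → ℝ, StrictMono f ∧ f c = d ∧ ∀ t, (t ≤ l ∨ u ≤ t) → f t = t := by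
  have hα : 1 < (d - l) / (c - l) := by rw [one_lt_div (by linarith)]; linarith
  have hβ : (u - d) / (u - c) < 1 := by rw [div_lt_one (by linarith)]; linarith
  have hβ0 : 0 < (u - d) / (u - c) := div_pos (by linarith) (by linarith)
  set α := (d - l) / (c - l) with hαd
  set β := (u - d) / (u - c) with hβd
  refine ⟨fun t => max t (min (l + (t - l) * α) (u - (u - t) * β)), ?_, ?_, ?_⟩
  · intro s t hst
    have e1 : l + (s - l) * α < l + (t - l) * α := by nlinarith
    have e2 : u - (u - s) * β < u - (u - t) * β := by nlinarith
    exact max_lt_max hst (min_lt_min e1 e2)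
  · have e1 : l + (c - l) * α = d := by
      rw [hαd]; have : c - l ≠ 0 := by linarith
      field_simp; ring
    have e2 : u - (u - c) * β = d := by
      rw [hβd]; have : u - c ≠ 0 := by linarith
      field_simp; ring
    simp only [e1, e2, min_self]
    exact max_eq_right h2.le
  · rintro t (ht | ht)
    · refine max_eq_left (le_trans (min_le_left _ _) ?_); nlinarith
    · refine max_eq_left (le_trans (min_le_right _ _) ?_); nlinarith

theorem good_move {R : GRD} {c d : ℝ} (hcd : c < d)
    (h : ∀ p ∈ R, ¬ (c < p.1 ∧ p.1 ≤ d)) : Good R (moveCol R c d) := by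
  obtain ⟨l, hl1, hl2, hl3⟩ := gap_left' R (show c - 1 < c by linarith)
  obtain ⟨u, hu1, hu2, hu3⟩ := gap_right' R (show d < d + 1 by linarith)
  obtain ⟨f, hf, hfc, hft⟩ := exists_strictMono hl2 hcd hu1
  have key : ∀ p ∈ R, f p.1 = if p.1 = c then d else p.1 := by
    intro p hp
    split_ifs with hpc
    · rw [hpc, hfc]
    · apply hft
      rcases lt_or_gt_of_ne hpc with h1 | h1
      · left; by_contra h2; exact hl3 p hp ⟨by linarith, h1⟩
      · right; by_contra h2
        exact hu3 p hp ⟨by by_contra h3; exact h p hp ⟨h1, by linarith⟩, by linarith⟩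
  have e : moveCol R c d = R.image fun p => (f p.1, p.2) := by
    unfold moveCol
    apply Finset.image_congr
    intro p hp
    have := key p hp
    simp only [this]
    split_ifs <;> simp
  apply good_of
  · exact Or.inr ⟨f, id, hf, strictMono_id, e⟩
  · refine Or.inr ⟨id, f, strictMono_id, hf, ?_⟩
    rw [e]; unfold tr; rw [Finset.image_image, Finset.image_image]; rfl

theorem good_swap {R : GRD} {a b : ℝ} (hab : a < b) (ha : ∃ p ∈ R, p.1 = a)
    (hb : ∃ p ∈ R, p.1 = b) (h : ∀ p ∈ R, ¬ (a < p.1 ∧ p.1 < b))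
    (hI : ¬ Interleave (fun y => (a, y) ∈ R) (fun y => (b, y) ∈ R)) :
    Good R (swapCols R a b) := by
  apply good_of
  · exact Or.inl (Or.inr (Or.inl (Or.inl ⟨a, b, hab, ha, hb, h, hI, rfl⟩)))
  · refine Or.inl (Or.inr (Or.inl (Or.inr ⟨a, b, hab, ?_, ?_, ?_, ?_, ?_⟩)))
    · obtain ⟨p, hp, e⟩ := ha
      exact ⟨(p.2, p.1), mem_tr.2 hp, e⟩
    · obtain ⟨p, hp, e⟩ := hb
      exact ⟨(p.2, p.1), mem_tr.2 hp, e⟩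
    · intro p hp; exact h _ (mem_tr.1 hp)
    · simpa only [mem_tr] using hI
    · unfold tr swapCols swapRows
      rw [Finset.image_image, Finset.image_image]
      congr 1
      funext p
      simp only [Function.comp]
      split_ifs <;> rfl

theorem good_add {R : GRD} {v : ℝ × ℝ} (h1 : ∃ w ∈ R, w.1 = v.1) (h2 : ∀ w ∈ R, w.2 ≠ v.2) :
    Good R (insert v R) := by
  have hv : v ∉ R := fun h => h2 v h rfl
  apply good_of
  · exact Or.inl (Or.inr (Or.inr (Or.inr (Or.inr (Or.inr ⟨v, hv, rfl, Or.inl ⟨h1, h2⟩⟩)))))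
  · refine Or.inl (Or.inr (Or.inr (Or.inr (Or.inr (Or.inr
      ⟨(v.2, v.1), fun h => hv (mem_tr.1 h), tr_insert _ _, Or.inr ⟨?_, ?_⟩⟩)))))
    · obtain ⟨w, hw, e⟩ := h1
      exact ⟨(w.2, w.1), mem_tr.2 hw, e⟩
    · intro w hw; exact h2 _ (mem_tr.1 hw)

theorem good_destab {B : GRD} {x y x' y' : ℝ} (hx : x' < x) (hy : y' < y) (hB : (x, y) ∉ B)
    (h1 : ∀ p ∈ B, ¬ (x' ≤ p.1 ∧ p.1 < x)) (h2 : ∀ p ∈ B, ¬ (y' ≤ p.2 ∧ p.2 < y)) :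
    Good (insert (x', y) (insert (x, y') (insert (x', y') B))) (insert (x, y) B) := by
  have gen : ∀ {B : GRD} {x y x' y' : ℝ} (hx : x' < x) (hy : y' < y) (hB : (x, y) ∉ B)
    (h1 : ∀ p ∈ B, ¬ (x' ≤ p.1 ∧ p.1 < x)) (h2 : ∀ p ∈ B, ¬ (y' ≤ p.2 ∧ p.2 < y)),
    Step true (insert (x', y) (insert (x, y') (insert (x', y') B))) (insert (x, y) B) := by
    intro B x y x' y' hx hy hB h1 h2
    refine Or.inl (Or.inr (Or.inr (Or.inr (Or.inl ⟨x, y, x', y', Finset.mem_insert_self _ _,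
      ?_, ?_, ?_, ?_, ?_, ?_⟩))))
    · simp [hx, hy]
    · intro p hp hs
      rcases Finset.mem_insert.1 hp with rfl | hp
      · rcases hs with hs | hs <;> simp at hs
      · rcases hs with hs | hs
        · linarith [hs.1, hs.2]
        · exact h1 p hp ⟨hs.1.le, hs.2⟩
    · intro p hp hs
      rcases Finset.mem_insert.1 hp with rfl | hp
      · rcases hs with hs | hs <;> simp at hs
      · rcases hs with hs | hs
        · linarith [hs.1, hs.2]
        · exact h2 p hp ⟨hs.1.le, hs.2⟩
    · intro p hp e
      rcases Finset.mem_insert.1 hp with rfl | hp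
      · exact hx.ne' e
      · exact h1 p hp ⟨e.ge, by rw [e]; exact hx⟩
    · intro p hp e
      rcases Finset.mem_insert.1 hp with rfl | hp
      · exact hy.ne' e
      · exact h2 p hp ⟨e.ge, by rw [e]; exact hy⟩
    · rw [Finset.erase_insert hB]
  apply good_of (gen hx hy hB h1 h2)
  have := gen (B := tr B) hy hx (fun h => hB (mem_tr.1 h))
    (fun p hp => h2 _ (mem_tr.1 hp)) (fun p hp => h1 _ (mem_tr.1 hp))
  rw [Finset.insert_comm] at this
  simpa only [tr_insert] using this

/-- positive vertical end shift -/
theorem good_shift_pos {B : GRD} {a e y₁ y₂ : ℝ} (he : a < e) (hy : y₁ < y₂)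
    (h0 : (a, y₁) ∉ B) (h2 : (a, y₂) ∈ B)
    (hadj : ∀ t, (a, t) ∈ B → ¬ (y₁ < t ∧ t < y₂))
    (hg : ∀ p ∈ B, ¬ (a < p.1 ∧ p.1 ≤ e)) :
    Good (insert (a, y₁) B) (insert (e, y₁) (insert (e, y₂) B)) := by
  have ee : a + (e - a) = e := by ring
  have hadj' : ∀ t, (a, t) ∈ insert (a, y₁) B → ¬ (y₁ < t ∧ t < y₂) := by
    intro t ht
    rcases Finset.mem_insert.1 ht with ht | ht
    · rw [(Prod.mk.inj ht).2]; simp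
    · exact hadj t ht
  have hg' : ∀ p ∈ insert (a, y₁) B, ¬ (a < p.1 ∧ p.1 ≤ e) := by
    intro p hp
    rcases Finset.mem_insert.1 hp with rfl | hp
    · simp
    · exact hg p hp
  apply good_of
  · refine Or.inl (Or.inr (Or.inr (Or.inr (Or.inr (Or.inl (Or.inl
      ⟨a, y₁, y₂, e - a, by linarith, hy, by simp, by simp [h2], hadj', Or.inl ⟨?_, ?_⟩⟩))))))
    · rw [ee]; exact hg'
    · rw [ee, if_pos rfl, Finset.erase_insert h0]
  · refine Or.inl (Or.inr (Or.inr (Or.inr (Or.inr (Or.inl (Or.inr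
      ⟨a, y₁, y₂, e - a, by linarith, hy, by simp [mem_tr], by simp [mem_tr, h2],
       fun t ht => hadj' t (mem_tr.1 ht), Or.inl ⟨?_, ?_⟩⟩))))))
    · rw [ee]; exact fun p hp => hg' _ (mem_tr.1 hp)
    · rw [ee, if_pos rfl]; simp only [tr_insert]
      rw [Finset.erase_insert (fun h => h0 (mem_tr.1 h))]

/-- negative vertical end shift -/
theorem good_shift_neg {B : GRD} {a e y₁ y₂ : ℝ} (he : e < a) (hy : y₁ < y₂)
    (h0 : (a, y₂) ∉ B) (h2 : (a, y₁) ∈ B)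
    (hadj : ∀ t, (a, t) ∈ B → ¬ (y₁ < t ∧ t < y₂))
    (hg : ∀ p ∈ B, ¬ (e ≤ p.1 ∧ p.1 < a)) :
    Good (insert (a, y₂) B) (insert (e, y₁) (insert (e, y₂) B)) := by
  have ee : a - (a - e) = e := by ring
  have hadj' : ∀ t, (a, t) ∈ insert (a, y₂) B → ¬ (y₁ < t ∧ t < y₂) := by
    intro t ht
    rcases Finset.mem_insert.1 ht with ht | ht
    · rw [(Prod.mk.inj ht).2]; simp
    · exact hadj t ht
  have hg' : ∀ p ∈ insert (a, y₂) B, ¬ (e ≤ p.1 ∧ p.1 < a) := by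
    intro p hp
    rcases Finset.mem_insert.1 hp with rfl | hp
    · simp
    · exact hg p hp
  apply good_of
  · refine Or.inl (Or.inr (Or.inr (Or.inr (Or.inr (Or.inl (Or.inl
      ⟨a, y₁, y₂, a - e, by linarith, hy, by simp [h2], by simp, hadj', Or.inr ⟨?_, ?_⟩⟩))))))
    · rw [ee]; exact hg'
    · rw [ee, if_pos rfl, Finset.erase_insert h0]
  · refine Or.inl (Or.inr (Or.inr (Or.inr (Or.inr (Or.inl (Or.inr
      ⟨a, y₁, y₂, a - e, by linarith, hy, by simp [mem_tr, h2], by simp [mem_tr],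
       fun t ht => hadj' t (mem_tr.1 ht), Or.inr ⟨?_, ?_⟩⟩))))))
    · rw [ee]; exact fun p hp => hg' _ (mem_tr.1 hp)
    · rw [ee, if_pos rfl]; simp only [tr_insert]
      rw [Finset.erase_insert (fun h => h0 (mem_tr.1 h))]

theorem good_slide {y₁ y₂ d : ℝ} (hy : y₁ < y₂) (n : ℕ) : ∀ (B : GRD) (c : ℝ), c < d →
    (B.filter fun p => c < p.1 ∧ p.1 < d).card ≤ n →
    (∀ p ∈ B, p.1 ≠ c) → (∀ p ∈ B, p.1 ≠ d) →
    (∀ p ∈ B, c < p.1 → p.1 < d → ¬ (y₁ ≤ p.2 ∧ p.2 ≤ y₂)) →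
    Good (insert (c, y₁) (insert (c, y₂) B)) (insert (d, y₁) (insert (d, y₂) B)) := by
  induction n with
  | zero =>
    intro B c hcd hn hc hd _
    have hn' : ∀ p ∈ B, ¬ (c < p.1 ∧ p.1 < d) := by
      intro p hp h
      have := Finset.card_eq_zero.1 (Nat.le_zero.1 hn)
      have h3 : p ∈ (B.filter fun p => c < p.1 ∧ p.1 < d) := Finset.mem_filter.2 ⟨hp, h⟩
      rw [this] at h3
      simp at h3
    have := good_move (R := insert (c, y₁) (insert (c, y₂) B)) hcd (by
      intro p hp
      simp only [Finset.mem_insert] at hp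
      rcases hp with rfl | rfl | hp
      · simp
      · simp
      · rintro ⟨h1, h2⟩
        exact hn' p hp ⟨h1, lt_of_le_of_ne h2 (hd p hp)⟩)
    convert this using 1
    unfold moveCol
    rw [Finset.image_insert, Finset.image_insert]
    simp only [if_true]
    congr 2
    symm
    calc _ = B.image id := Finset.image_congr (fun p hp => by simp [hc p hp])
      _ = B := Finset.image_id
  | succ n ih =>
    intro B c hcd hn hc hd hr
    by_cases hn' : (B.filter fun p => c < p.1 ∧ p.1 < d).Nonempty
    swap
    · rw [Finset.not_nonempty_iff_eq_empty] at hn'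
      refine ?_
      have hn0 : (B.filter fun p => c < p.1 ∧ p.1 < d).card ≤ n := by rw [hn']; simp
      exact ih B c hcd hn0 hc hd hr
    obtain ⟨q, hq, hmin⟩ := Finset.exists_min_image _ Prod.fst hn'
    obtain ⟨hqB, hcq, hqd⟩ := Finset.mem_filter.1 hq
    obtain ⟨b, z⟩ := q
    simp only at hcq hqd hmin
    have hmin' : ∀ p ∈ B, c < p.1 → b ≤ p.1 := by
      intro p hp h
      by_cases h2 : p.1 < d
      · exact hmin p (Finset.mem_filter.2 ⟨hp, h, h2⟩)
      · linarith
    obtain ⟨e, hbe, hed, he⟩ := gap_right' B hqd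
    have g1 := good_swap (R := insert (c, y₁) (insert (c, y₂) B)) hcq ⟨(c, y₁), by simp, rfl⟩
      ⟨(b, z), by simp [hqB], rfl⟩ (by
        intro p hp
        simp only [Finset.mem_insert] at hp
        rcases hp with rfl | rfl | hp
        · simp
        · simp
        · rintro ⟨h1, h2⟩
          exact absurd (hmin' p hp h1) (not_le.2 h2)) (by
        have hA : ∀ y, (c, y) ∈ insert (c, y₁) (insert (c, y₂) B) → y = y₁ ∨ y = y₂ := by
          intro y h
          simp only [Finset.mem_insert, Prod.mk.injEq, true_and] at h
          rcases h with h | h | h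
          · exact Or.inl h
          · exact Or.inr h
          · exact absurd rfl (hc _ h)
        have hBb : ∀ y, (b, y) ∈ insert (c, y₁) (insert (c, y₂) B) → ¬ (y₁ ≤ y ∧ y ≤ y₂) := by
          intro y h
          simp only [Finset.mem_insert, Prod.mk.injEq, hcq.ne', false_and, false_or] at h
          exact hr _ h hcq hqd
        rintro (⟨a1, ha1, b1, hb1, a2, ha2, b2, hb2, h1, h2, h3⟩ |
          ⟨b1, hb1, a1, ha1, b2, hb2, a2, ha2, h1, h2, h3⟩)
        · apply hBb _ hb1
          rcases hA _ ha1 with rfl | rfl <;> rcases hA _ ha2 with rfl | rfl <;>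
            constructor <;> linarith
        · apply hBb _ hb2
          rcases hA _ ha1 with rfl | rfl <;> rcases hA _ ha2 with rfl | rfl <;>
            constructor <;> linarith)
    have r1 : swapCols (insert (c, y₁) (insert (c, y₂) B)) c b =
        insert (b, y₁) (insert (b, y₂) (moveCol B b c)) := by
      unfold swapCols moveCol
      rw [Finset.image_insert, Finset.image_insert]
      simp only [if_true]
      congr 2
      apply Finset.image_congr
      intro p hp
      simp [hc p hp]
    have hm : ∀ p ∈ moveCol B b c, p.1 = c ∨ (p ∈ B ∧ p.1 ≠ b) := by
      intro p hp
      unfold moveCol at hp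
      obtain ⟨q, hq, rfl⟩ := Finset.mem_image.1 hp
      split_ifs with h
      · left; rfl
      · right; exact ⟨hq, h⟩
    have g2 := good_move (R := insert (b, y₁) (insert (b, y₂) (moveCol B b c))) hbe (by
        intro p hp
        simp only [Finset.mem_insert] at hp
        rcases hp with rfl | rfl | hp
        · simp
        · simp
        · rcases hm p hp with h | h
          · rw [h]; rintro ⟨h1, h2⟩; linarith
          · exact he p h.1)
    have r2 : moveCol (insert (b, y₁) (insert (b, y₂) (moveCol B b c))) b e =
        insert (e, y₁) (insert (e, y₂) (moveCol B b c)) := by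
      conv_lhs => unfold moveCol
      rw [Finset.image_insert, Finset.image_insert]
      simp only [if_true]
      congr 2
      calc _ = (moveCol B b c).image id := Finset.image_congr (fun p hp => by
            have : p.1 ≠ b := by
              rcases hm p hp with h | h
              · rw [h]; exact hcq.ne
              · exact h.2
            simp [this])
        _ = _ := Finset.image_id
    have g3 := good_move (R := insert (e, y₁) (insert (e, y₂) (moveCol B b c))) hcq (by
        intro p hp
        simp only [Finset.mem_insert] at hp
        rcases hp with rfl | rfl | hp
        · rintro ⟨h1, h2⟩; simp at h2; linarith
        · rintro ⟨h1, h2⟩; simp at h2; linarith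
        · rcases hm p hp with h | h
          · rw [h]; simp
          · rintro ⟨h1, h2⟩
            exact h.2 (le_antisymm h2 (hmin' p h.1 h1)))
    have hec : e ≠ c := by linarith
    have r3 : moveCol (insert (e, y₁) (insert (e, y₂) (moveCol B b c))) c b =
        insert (e, y₁) (insert (e, y₂) B) := by
      unfold moveCol
      rw [Finset.image_insert, Finset.image_insert]
      simp only [hec, if_false]
      congr 2
      rw [Finset.image_image]
      calc _ = B.image id := Finset.image_congr (fun p hp => by
            simp only [Function.comp, id]
            by_cases h : p.1 = b
            · simp [h]; rw [← h]
            · simp [h, hc p hp])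
        _ = _ := Finset.image_id
    rw [r1] at g1
    rw [r2] at g2
    rw [r3] at g3
    refine ((g1.trans g2).trans g3).trans (ih B e hed ?_ ?_ hd ?_)
    · have : (B.filter fun p => e < p.1 ∧ p.1 < d) ⊂ (B.filter fun p => c < p.1 ∧ p.1 < d) := by
        rw [Finset.ssubset_iff_of_subset]
        · refine ⟨(b, z), hq, ?_⟩
          simp only [Finset.mem_filter, not_and]
          intro _ h; linarith
        · intro p hp
          rw [Finset.mem_filter] at hp ⊢
          exact ⟨hp.1, by linarith [hp.2.1], hp.2.2⟩
      have := Finset.card_lt_card this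
      omega
    · intro p hp h
      exact he p hp ⟨by rw [h]; exact hbe, h.le⟩
    · intro p hp h1 h2
      exact hr p hp (by linarith) h2

theorem slideCol {y₁ y₂ c d : ℝ} (hy : y₁ < y₂) {B : GRD} (hcd : c < d)
    (hc : ∀ p ∈ B, p.1 ≠ c) (hd : ∀ p ∈ B, p.1 ≠ d)
    (hr : ∀ p ∈ B, c < p.1 → p.1 < d → ¬ (y₁ ≤ p.2 ∧ p.2 ≤ y₂)) :
    Good (insert (c, y₁) (insert (c, y₂) B)) (insert (d, y₁) (insert (d, y₂) B)) :=
  good_slide hy _ B c hcd le_rfl hc hd hr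

theorem slideRow {x₁ x₂ c d : ℝ} (hx : x₁ < x₂) {B : GRD} (hcd : c < d)
    (hc : ∀ p ∈ B, p.2 ≠ c) (hd : ∀ p ∈ B, p.2 ≠ d)
    (hr : ∀ p ∈ B, c < p.2 → p.2 < d → ¬ (x₁ ≤ p.1 ∧ p.1 ≤ x₂)) :
    Good (insert (x₁, c) (insert (x₂, c) B)) (insert (x₁, d) (insert (x₂, d) B)) := by
  have := (slideCol (B := tr B) hx hcd (fun p hp => hc _ (mem_tr.1 hp))
    (fun p hp => hd _ (mem_tr.1 hp)) (fun p hp => hr _ (mem_tr.1 hp))).tr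
  simpa only [tr_insert, tr_tr] using this

theorem good_shiftRow_pos {B : GRD} {a e x₁ x₂ : ℝ} (he : a < e) (hx : x₁ < x₂)
    (h0 : (x₁, a) ∉ B) (h2 : (x₂, a) ∈ B)
    (hadj : ∀ t, (t, a) ∈ B → ¬ (x₁ < t ∧ t < x₂))
    (hg : ∀ p ∈ B, ¬ (a < p.2 ∧ p.2 ≤ e)) :
    Good (insert (x₁, a) B) (insert (x₁, e) (insert (x₂, e) B)) := by
  have := (good_shift_pos (B := tr B) he hx (fun h => h0 (mem_tr.1 h)) (mem_tr.2 h2)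
    (fun t ht => hadj t (mem_tr.1 ht)) (fun p hp => hg _ (mem_tr.1 hp))).tr
  simpa only [tr_insert, tr_tr] using this

theorem good_shiftRow_neg {B : GRD} {a e x₁ x₂ : ℝ} (he : e < a) (hx : x₁ < x₂)
    (h0 : (x₂, a) ∉ B) (h2 : (x₁, a) ∈ B)
    (hadj : ∀ t, (t, a) ∈ B → ¬ (x₁ < t ∧ t < x₂))
    (hg : ∀ p ∈ B, ¬ (e ≤ p.2 ∧ p.2 < a)) :
    Good (insert (x₂, a) B) (insert (x₁, e) (insert (x₂, e) B)) := by
  have := (good_shift_neg (B := tr B) he hx (fun h => h0 (mem_tr.1 h)) (mem_tr.2 h2)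
    (fun t ht => hadj t (mem_tr.1 ht)) (fun p hp => hg _ (mem_tr.1 hp))).tr
  simpa only [tr_insert, tr_tr] using this

/-- Removal of a leaf `(x, a)` which is alone in its column and not last in its row. -/
theorem good_leaf {B : GRD} {x a : ℝ} (hx : ∀ p ∈ B, p.1 ≠ x)
    (hex : ∃ p ∈ B, p.2 = a ∧ x < p.1) : Good (insert (x, a) B) B := by
  have hne : (B.filter fun p => p.2 = a ∧ x < p.1).Nonempty := by
    obtain ⟨p, hp, h⟩ := hex
    exact ⟨p, Finset.mem_filter.2 ⟨hp, h⟩⟩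
  obtain ⟨q, hq, hmin⟩ := Finset.exists_min_image _ Prod.fst hne
  obtain ⟨hqB, hqa, hxq⟩ := Finset.mem_filter.1 hq
  obtain ⟨x₂, a'⟩ := q
  simp only at hqa hxq hmin
  subst hqa
  have hadj : ∀ t, (t, a') ∈ B → ¬ (x < t ∧ t < x₂) := by
    rintro t ht ⟨h1, h2⟩
    exact absurd (hmin _ (Finset.mem_filter.2 ⟨ht, rfl, h1⟩)) (not_le.2 h2)
  obtain ⟨e, -, hea, he⟩ := gap_left2 B (show a' - 1 < a' by linarith)
  obtain ⟨d, hxd, hd2, hd⟩ := gap_left' B hxq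
  obtain ⟨B0, hB0, rfl⟩ : ∃ B0 : GRD, (x₂, a') ∉ B0 ∧ B = insert (x₂, a') B0 :=
    ⟨B.erase (x₂, a'), Finset.notMem_erase _ _, (Finset.insert_erase hqB).symm⟩
  have g1 := good_shiftRow_neg (B := insert (x, a') B0) hea hxq
    (by simp [hxq.ne', hB0]) (by simp) (by
      intro t ht
      rcases Finset.mem_insert.1 ht with h | h
      · rw [(Prod.mk.inj h).1]; simp
      · exact hadj t (Finset.mem_insert_of_mem h)) (by
      intro p hp
      rcases Finset.mem_insert.1 hp with rfl | h
      · simp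
      · exact he p (Finset.mem_insert_of_mem h))
  have g2 := slideCol (B := insert (x₂, e) B0) (c := x) (d := d) hea hxd (by
      intro p hp
      rcases Finset.mem_insert.1 hp with rfl | h
      · exact hxq.ne'
      · exact hx p (Finset.mem_insert_of_mem h)) (by
      intro p hp
      rcases Finset.mem_insert.1 hp with rfl | h
      · exact hd2.ne'
      · intro h1
        exact hd p (Finset.mem_insert_of_mem h) ⟨h1.ge, by linarith⟩) (by
      intro p hp h1 h2
      rcases Finset.mem_insert.1 hp with rfl | h
      · simp at h2; linarith
      · rintro ⟨h3, h4⟩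
        rcases h4.lt_or_eq with h5 | h5
        · exact he p (Finset.mem_insert_of_mem h) ⟨h3, h5⟩
        · refine hadj p.1 ?_ ⟨h1, by linarith⟩
          rw [← h5]; exact Finset.mem_insert_of_mem h)
  have g3 := good_destab (B := B0) hd2 hea hB0
    (fun p hp => hd p (Finset.mem_insert_of_mem hp))
    (fun p hp => he p (Finset.mem_insert_of_mem hp))
  have e0 : insert (x, a') (insert (x₂, a') B0) = insert (x₂, a') (insert (x, a') B0) :=
    Finset.insert_comm _ _ _
  have e1 : insert (x, e) (insert (x₂, e) (insert (x, a') B0)) =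
      insert (x, e) (insert (x, a') (insert (x₂, e) B0)) := by
    rw [Finset.insert_comm (x₂, e)]
  have e2 : insert (d, e) (insert (d, a') (insert (x₂, e) B0)) =
      insert (d, a') (insert (x₂, e) (insert (d, e) B0)) := by
    rw [Finset.insert_comm (d, e), Finset.insert_comm (d, e)]
  rw [e1] at g1
  rw [e2] at g2
  rw [e0]
  exact (g1.trans g2).trans g3

theorem good_leafRow {B : GRD} {y a : ℝ} (hy : ∀ p ∈ B, p.2 ≠ y)
    (hex : ∃ p ∈ B, p.1 = a ∧ y < p.2) : Good (insert (a, y) B) B := by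
  have := (good_leaf (B := tr B) (fun p hp => hy _ (mem_tr.1 hp)) (by
    obtain ⟨p, hp, h⟩ := hex
    exact ⟨(p.2, p.1), mem_tr.2 hp, h⟩)).tr
  simpa only [tr_insert, tr_tr] using this

/-- The rectangle move. -/
theorem good_rect {B : GRD} {x₁ x₂ y₁ y₂ : ℝ} (hx : x₁ < x₂) (hy : y₁ < y₂)
    (h12 : (x₁, y₂) ∈ B) (h21 : (x₂, y₁) ∈ B)
    (hr : ∀ p ∈ B, x₁ ≤ p.1 → p.1 ≤ x₂ → y₁ ≤ p.2 → p.2 ≤ y₂ → p = (x₁, y₂) ∨ p = (x₂, y₁)) :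
    Good (insert (x₁, y₁) B) (insert (x₂, y₂) B) := by
  have h11 : (x₁, y₁) ∉ B := by
    intro h
    have := hr _ h le_rfl hx.le le_rfl hy.le
    simp [hx.ne, hy.ne] at this
  have h22 : (x₂, y₂) ∉ B := by
    intro h
    have := hr _ h hx.le le_rfl hy.le le_rfl
    simp [hx.ne', hy.ne'] at this
  obtain ⟨d, hd1, hd2, hd⟩ := gap_left' B hx
  obtain ⟨e, he1, he2, he⟩ := gap_right' B hd1
  obtain ⟨g, hg1, hg2, hg⟩ := gap_left2 B hy
  obtain ⟨f, hf1, hf2, hf⟩ := gap_right2 B hg1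
  have s1 := good_shift_pos he1 hy h11 h12 (by
    rintro t ht ⟨h1, h2⟩
    have := hr _ ht le_rfl hx.le h1.le h2.le
    simp [hx.ne, h2.ne] at this) he
  have s2 := slideCol (B := B) hy he2 (fun p hp h => he p hp ⟨by linarith, h.le⟩)
    (fun p hp h => hd p hp ⟨h.ge, by linarith⟩) (by
    rintro p hp h1 h2 ⟨h3, h4⟩
    rcases hr p hp (by linarith) (by linarith) h3 h4 with rfl | rfl
    · simp at h1; linarith
    · simp at h2; linarith)
  have hdB : ∀ y, (d, y) ∉ B := fun y h => hd _ h ⟨le_rfl, hd2⟩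
  have s3 := good_shiftRow_pos (B := insert (d, y₂) B) hf1 hd2 (by simp [hy.ne, hdB])
    (by simp [h21]) (by
    rintro t ht ⟨h1, h2⟩
    rcases Finset.mem_insert.1 ht with h | h
    · exact hy.ne (Prod.mk.inj h).2
    · exact hd _ h ⟨h1.le, h2⟩) (by
    intro p hp
    rcases Finset.mem_insert.1 hp with rfl | h
    · rintro ⟨-, h⟩; simp at h; linarith
    · exact hf p h)
  have s4 := slideRow (B := insert (d, y₂) B) hd2 hf2 (by
    intro p hp
    rcases Finset.mem_insert.1 hp with rfl | h
    · simp; linarith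
    · intro h1; exact hf p h ⟨by linarith, h1.le⟩) (by
    intro p hp
    rcases Finset.mem_insert.1 hp with rfl | h
    · exact hg2.ne'
    · intro h1; exact hg p h ⟨h1.ge, by linarith⟩) (by
    rintro p hp h1 h2 ⟨h3, h4⟩
    rcases Finset.mem_insert.1 hp with rfl | h
    · simp at h2; linarith
    · rcases hr p h (by linarith) h4 (by linarith) (by linarith) with rfl | rfl
      · simp at h3; linarith
      · simp at h1; linarith)
  have s5 := good_destab (B := B) hd2 hg2 h22 hd hg
  have e2 : insert (d, g) (insert (x₂, g) (insert (d, y₂) B)) =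
      insert (d, y₂) (insert (x₂, g) (insert (d, g) B)) := by
    rw [Finset.insert_comm (x₂, g), Finset.insert_comm (d, g), Finset.insert_comm (d, g)]
  rw [e2] at s4
  exact (((s1.trans s2).trans s3).trans s4).trans s5

/-- The upper-right copy of a vertex under the flype. -/
def fl (M : ℝ) (p : ℝ × ℝ) : ℝ × ℝ := (p.2 + M, p.1 + M)
/-- The upper-left leaf. -/
def lf1 (M : ℝ) (p : ℝ × ℝ) : ℝ × ℝ := (p.1, p.1 + M)
/-- The lower-right leaf. -/
def lf2 (M : ℝ) (p : ℝ × ℝ) : ℝ × ℝ := (p.2 + M, p.2)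

/-- All coordinates translated by `M` exceed all coordinates. -/
def Big (R : GRD) (M : ℝ) : Prop :=
  ∀ p ∈ R, ∀ q ∈ R, p.1 < q.1 + M ∧ p.1 < q.2 + M ∧ p.2 < q.1 + M ∧ p.2 < q.2 + M

theorem exists_big (R : GRD) : ∃ M, Big R M := by
  have : ∃ K : ℝ, ∀ p ∈ R, |p.1| ≤ K ∧ |p.2| ≤ K := by
    refine ⟨∑ p ∈ R, (|p.1| + |p.2|), fun p hp => ?_⟩
    have := Finset.single_le_sum (f := fun p : ℝ × ℝ => |p.1| + |p.2|)
      (fun i _ => by positivity) hp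
    have h1 := abs_nonneg p.1
    have h2 := abs_nonneg p.2
    constructor <;> linarith
  obtain ⟨K, hK⟩ := this
  refine ⟨2 * K + 1, fun p hp q hq => ?_⟩
  obtain ⟨h1, h2⟩ := hK p hp
  obtain ⟨h3, h4⟩ := hK q hq
  rw [abs_le] at h1 h2 h3 h4
  refine ⟨?_, ?_, ?_, ?_⟩ <;> linarith

theorem add_lf1 {R : GRD} {M : ℝ} (hM : Big R M) (S : GRD) : S ⊆ R →
    Good R (S.image (lf1 M) ∪ R) := by
  induction S using Finset.induction_on with
  | empty => intro _; simpa using Good.refl R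
  | insert p S _ ih =>
    intro hS
    have hp : p ∈ R := hS (Finset.mem_insert_self _ _)
    have hS' : S ⊆ R := fun q hq => hS (Finset.mem_insert_of_mem hq)
    refine (ih hS').trans ?_
    rw [Finset.image_insert, Finset.insert_union]
    by_cases h : lf1 M p ∈ S.image (lf1 M)
    · rw [Finset.insert_eq_of_mem (Finset.mem_union_left _ h)]
      exact Good.refl _
    · apply good_add
      · exact ⟨p, Finset.mem_union_right _ hp, rfl⟩
      · intro w hw
        rcases Finset.mem_union.1 hw with hw | hw
        · obtain ⟨q, hq, rfl⟩ := Finset.mem_image.1 hw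
          intro e
          apply h
          have e' : q.1 = p.1 := by simpa [lf1] using e
          rw [show lf1 M p = lf1 M q by simp [lf1, e']]
          exact hw
        · exact (hM w hw p hp).2.2.1.ne

theorem add_lf2 {R : GRD} {M : ℝ} (hM : Big R M) (S : GRD) : S ⊆ R →
    Good (R.image (lf1 M) ∪ R) (S.image (lf2 M) ∪ (R.image (lf1 M) ∪ R)) := by
  induction S using Finset.induction_on with
  | empty => intro _; simpa using Good.refl _
  | insert p S _ ih =>
    intro hS
    have hp : p ∈ R := hS (Finset.mem_insert_self _ _)
    have hS' : S ⊆ R := fun q hq => hS (Finset.mem_insert_of_mem hq)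
    refine (ih hS').trans ?_
    rw [Finset.image_insert, Finset.insert_union]
    by_cases h : lf2 M p ∈ S.image (lf2 M)
    · rw [Finset.insert_eq_of_mem (Finset.mem_union_left _ h)]
      exact Good.refl _
    · have := (good_add (R := tr (S.image (lf2 M) ∪ (R.image (lf1 M) ∪ R)))
        (v := ((lf2 M p).2, (lf2 M p).1)) ?_ ?_).tr
      · simpa only [tr_insert, tr_tr] using this
      · exact ⟨(p.2, p.1), mem_tr.2 (by simp [hp]), rfl⟩
      · intro w hw
        have hw := mem_tr.1 hw
        rcases Finset.mem_union.1 hw with hw | hw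
        · obtain ⟨q, hq, e0⟩ := Finset.mem_image.1 hw
          intro e
          apply h
          have e' : q.2 = p.2 := by
            have := congrArg Prod.fst e0
            simp only [lf2] at this e
            linarith
          rw [show lf2 M p = lf2 M q by simp [lf2, e']]
          exact Finset.mem_image_of_mem _ hq
        rcases Finset.mem_union.1 hw with hw | hw
        · obtain ⟨q, hq, e0⟩ := Finset.mem_image.1 hw
          have := congrArg Prod.fst e0
          simp only [lf1] at this
          have := (hM q hq p hp).2.1
          simp only [lf2]
          linarith
        · exact (hM _ hw p hp).2.1.ne

theorem rem_lf1 {R : GRD} {M : ℝ} (hM : Big R M) (S : GRD) : S ⊆ R →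
    Good (S.image (lf1 M) ∪ (R.image (lf2 M) ∪ R.image (fl M)))
      (R.image (lf2 M) ∪ R.image (fl M)) := by
  induction S using Finset.induction_on with
  | empty => intro _; simpa using Good.refl _
  | insert p S _ ih =>
    intro hS
    have hp : p ∈ R := hS (Finset.mem_insert_self _ _)
    have hS' : S ⊆ R := fun q hq => hS (Finset.mem_insert_of_mem hq)
    refine Good.trans ?_ (ih hS')
    rw [Finset.image_insert, Finset.insert_union]
    by_cases h : lf1 M p ∈ S.image (lf1 M)
    · rw [Finset.insert_eq_of_mem (Finset.mem_union_left _ h)]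
      exact Good.refl _
    · apply good_leaf
      · intro w hw
        rcases Finset.mem_union.1 hw with hw | hw
        · obtain ⟨q, hq, rfl⟩ := Finset.mem_image.1 hw
          intro e
          apply h
          have e' : q.1 = p.1 := e
          rw [show lf1 M p = lf1 M q by simp [lf1, e']]
          exact hw
        rcases Finset.mem_union.1 hw with hw | hw
        · obtain ⟨q, hq, rfl⟩ := Finset.mem_image.1 hw
          exact (hM p hp q hq).2.1.ne'
        · obtain ⟨q, hq, rfl⟩ := Finset.mem_image.1 hw
          exact (hM p hp q hq).2.1.ne'
      · exact ⟨fl M p, Finset.mem_union_right _ (Finset.mem_union_right _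
          (Finset.mem_image_of_mem _ hp)), rfl, (hM p hp p hp).2.1⟩

theorem rem_lf2 {R : GRD} {M : ℝ} (hM : Big R M) (S : GRD) : S ⊆ R →
    Good (S.image (lf2 M) ∪ R.image (fl M)) (R.image (fl M)) := by
  induction S using Finset.induction_on with
  | empty => intro _; simpa using Good.refl _
  | insert p S _ ih =>
    intro hS
    have hp : p ∈ R := hS (Finset.mem_insert_self _ _)
    have hS' : S ⊆ R := fun q hq => hS (Finset.mem_insert_of_mem hq)
    refine Good.trans ?_ (ih hS')
    rw [Finset.image_insert, Finset.insert_union]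
    by_cases h : lf2 M p ∈ S.image (lf2 M)
    · rw [Finset.insert_eq_of_mem (Finset.mem_union_left _ h)]
      exact Good.refl _
    · apply good_leafRow
      · intro w hw
        rcases Finset.mem_union.1 hw with hw | hw
        · obtain ⟨q, hq, rfl⟩ := Finset.mem_image.1 hw
          intro e
          apply h
          have e' : q.2 = p.2 := e
          rw [show lf2 M p = lf2 M q by simp [lf2, e']]
          exact hw
        · obtain ⟨q, hq, rfl⟩ := Finset.mem_image.1 hw
          exact (hM p hp q hq).2.2.1.ne'
      · exact ⟨fl M p, Finset.mem_union_right _ (Finset.mem_image_of_mem _ hp), rfl,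
          (hM p hp p hp).2.2.1⟩

/-- Lexicographic order on vertices. -/
def lexlt (p q : ℝ × ℝ) : Prop := p.1 < q.1 ∨ (p.1 = q.1 ∧ p.2 < q.2)

theorem exists_lexmax (S : GRD) (h : S.Nonempty) : ∃ v ∈ S, ∀ s ∈ S, s ≠ v → lexlt s v := by
  obtain ⟨v, hv, hmax⟩ := Finset.exists_max_image S (fun p => toLex p) h
  refine ⟨v, hv, fun s hs hne => ?_⟩
  have h1 := hmax s hs
  rw [Prod.Lex.toLex_le_toLex] at h1
  rcases h1 with h1 | ⟨h1, h2⟩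
  · exact Or.inl h1
  · refine Or.inr ⟨h1, lt_of_le_of_ne h2 fun h3 => hne (Prod.ext h1 h3)⟩

theorem flype_all {R : GRD} {M : ℝ} (hM : Big R M) (n : ℕ) : ∀ S T : GRD, S.card = n →
    S ⊆ R → T ⊆ R → (∀ s ∈ S, ∀ t ∈ T, lexlt s t) →
    Good (S ∪ T.image (fl M) ∪ (R.image (lf1 M) ∪ R.image (lf2 M)))
      ((S ∪ T).image (fl M) ∪ (R.image (lf1 M) ∪ R.image (lf2 M))) := by
  induction n with
  | zero =>
    intro S T hn _ _ _
    rw [Finset.card_eq_zero] at hn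
    subst hn
    simpa using Good.refl _
  | succ n ih =>
    intro S T hn hS hT hlex
    obtain ⟨v, hv, hmax⟩ := exists_lexmax S (Finset.card_pos.1 (by omega))
    obtain ⟨S, hvS, rfl⟩ : ∃ S0 : GRD, v ∉ S0 ∧ S = insert v S0 :=
      ⟨S.erase v, Finset.notMem_erase _ _, (Finset.insert_erase hv).symm⟩
    rw [Finset.card_insert_of_notMem hvS] at hn
    have hvR : v ∈ R := hS hv
    have hS' : S ⊆ R := fun q hq => hS (Finset.mem_insert_of_mem hq)
    have hmax' : ∀ s ∈ S, lexlt s v := fun s hs =>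
      hmax s (Finset.mem_insert_of_mem hs) (fun h => hvS (h ▸ hs))
    have hT' : ∀ t ∈ T, lexlt v t := hlex v hv
    have hvM := hM v hvR v hvR
    have key := good_rect (B := S ∪ T.image (fl M) ∪ (R.image (lf1 M) ∪ R.image (lf2 M)))
      (x₁ := v.1) (x₂ := v.2 + M) (y₁ := v.2) (y₂ := v.1 + M) hvM.2.1 hvM.2.2.1
      (Finset.mem_union_right _ (Finset.mem_union_left _ (Finset.mem_image_of_mem (lf1 M) hvR)))
      (Finset.mem_union_right _ (Finset.mem_union_right _ (Finset.mem_image_of_mem (lf2 M) hvR)))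
      (by
        intro p hp h1 h2 h3 h4
        simp only [Finset.mem_union, Finset.mem_image] at hp
        rcases hp with (hp | ⟨q, hq, rfl⟩) | (⟨q, hq, rfl⟩ | ⟨q, hq, rfl⟩)
        · rcases hmax' p hp with h | h
          · linarith
          · linarith [h.1, h.2]
        · simp only [fl] at h1 h2 h3 h4
          rcases hT' q hq with h | h
          · linarith
          · linarith [h.1, h.2]
        · simp only [lf1] at h1 h2 h3 h4
          left
          have : q.1 = v.1 := by linarith
          simp [lf1, this]
        · simp only [lf2] at h1 h2 h3 h4
          right
          have : q.2 = v.2 := by linarith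
          simp [lf2, this])
    have fin := ih S (insert v T) (by omega) hS' (by
        intro q hq
        rcases Finset.mem_insert.1 hq with rfl | hq
        · exact hvR
        · exact hT hq) (by
        intro s hs t ht
        rcases Finset.mem_insert.1 ht with rfl | ht
        · exact hmax' s hs
        · exact hlex s (Finset.mem_insert_of_mem hs) t ht)
    have e1 : insert v S ∪ T.image (fl M) ∪ (R.image (lf1 M) ∪ R.image (lf2 M)) =
        insert (v.1, v.2) (S ∪ T.image (fl M) ∪ (R.image (lf1 M) ∪ R.image (lf2 M))) := by
      rw [Finset.insert_union, Finset.insert_union]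
    have e2 : S ∪ (insert v T).image (fl M) ∪ (R.image (lf1 M) ∪ R.image (lf2 M)) =
        insert (v.2 + M, v.1 + M)
          (S ∪ T.image (fl M) ∪ (R.image (lf1 M) ∪ R.image (lf2 M))) := by
      rw [Finset.image_insert, Finset.union_insert, Finset.insert_union]; rfl
    have e3 : S ∪ insert v T = insert v S ∪ T := by
      rw [Finset.union_insert, Finset.insert_union]
    rw [e1]
    rw [e2, e3] at fin
    exact key.trans fin

/-- the reflection of a generalized rectangular diagram in the line
`x = y` can be obtained from it by a finite sequence of elementary moves of type L. -/
theorem statement13 (R : GRD) :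
    Relation.ReflTransGen (Step true) R (R.image fun p => (p.2, p.1)) := by
  obtain ⟨M, hM⟩ := exists_big R
  have a1 := add_lf1 hM R (Finset.Subset.refl _)
  have a2 := add_lf2 hM R (Finset.Subset.refl _)
  have a3 := flype_all hM _ R ∅ rfl (Finset.Subset.refl _) (Finset.empty_subset _) (by simp)
  have a4 := rem_lf1 hM R (Finset.Subset.refl _)
  have a5 := rem_lf2 hM R (Finset.Subset.refl _)
  have e1 : R.image (lf2 M) ∪ (R.image (lf1 M) ∪ R) =
      R ∪ (∅ : GRD).image (fl M) ∪ (R.image (lf1 M) ∪ R.image (lf2 M)) := by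
    ext p; simp only [Finset.mem_union, Finset.image_empty, Finset.notMem_empty]; tauto
  have e2 : (R ∪ ∅).image (fl M) ∪ (R.image (lf1 M) ∪ R.image (lf2 M)) =
      R.image (lf1 M) ∪ (R.image (lf2 M) ∪ R.image (fl M)) := by
    rw [Finset.union_empty]
    ext p; simp only [Finset.mem_union]; tauto
  rw [e1] at a2
  rw [e2] at a3
  refine ((((a1.trans a2).trans a3).trans a4).trans a5).1.tail (Or.inr ?_)
  have hm : StrictMono fun t : ℝ => t - M := fun s t h => by simpa using h
  refine ⟨fun t => t - M, fun t => t - M, hm, hm, ?_⟩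
  rw [Finset.image_image]
  congr 1
  funext p
  simp [fl]

end RectDiag
end

section
/- Every generalized rectangular diagram can be transformed, by a finite sequence of elementary moves of type L, into a diagram in which every vertical edge contains exactly two vertices. -/
namespace RectDiag

noncomputable def colS (R : GRD) (x : ℝ) : Finset (ℝ × ℝ) := R.filter fun p => p.1 = x

def GoodCol (R : GRD) (x : ℝ) : Prop := (colS R x).card = 0 ∨ (colS R x).card = 2

theorem mem_colS (R : GRD) (x : ℝ) (p : ℝ × ℝ) : p ∈ colS R x ↔ p ∈ R ∧ p.1 = x := by
  simp [colS]

theorem exists_eps (R : GRD) (a : ℝ) : ∃ ε : ℝ, 0 < ε ∧ ∀ p ∈ R, ¬ (a < p.1 ∧ p.1 ≤ a + ε) := by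
  induction R using Finset.induction_on with
  | empty => exact ⟨1, one_pos, by simp⟩
  | insert q R hq ih =>
    obtain ⟨ε, hε, h⟩ := ih
    by_cases hqa : a < q.1
    · refine ⟨min ε ((q.1 - a) / 2), lt_min hε (by linarith), ?_⟩
      intro p hp hh
      have h1 := min_le_left ε ((q.1 - a) / 2)
      have h2 := min_le_right ε ((q.1 - a) / 2)
      rcases Finset.mem_insert.1 hp with rfl | hp
      · linarith [hh.2]
      · exact h p hp ⟨hh.1, by linarith [hh.2]⟩
    · refine ⟨ε, hε, ?_⟩
      intro p hp hh
      rcases Finset.mem_insert.1 hp with rfl | hp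
      · exact hqa hh.1
      · exact h p hp hh

theorem fix_col (n : ℕ) : ∀ (R : GRD) (a : ℝ), (colS R a).card = n →
    ∃ R' : GRD, Relation.ReflTransGen (Step true) R R' ∧
      ∀ x, ¬ GoodCol R' x → ¬ GoodCol R x ∧ x ≠ a := by
  induction n using Nat.strong_induction_on with
  | _ n ih =>
  intro R a hn
  by_cases h02 : GoodCol R a
  · refine ⟨R, .refl, fun x hx => ⟨hx, ?_⟩⟩
    rintro rfl
    exact hx h02
  have hn0 : n ≠ 0 := fun h => h02 (Or.inl (hn.trans h))
  have hn2 : n ≠ 2 := fun h => h02 (Or.inr (hn.trans h))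
  by_cases hn1 : n = 1
  · subst hn1
    obtain ⟨⟨u, v⟩, hw⟩ := Finset.card_eq_one.1 hn
    have hwm : (u, v) ∈ colS R a := by simp [hw]
    rw [mem_colS] at hwm
    obtain ⟨hwR, hua⟩ := hwm
    obtain ⟨y, hy⟩ := Infinite.exists_notMem_finset (R.image Prod.snd)
    have hy' : ∀ w ∈ R, w.2 ≠ y := fun w hw h => hy (Finset.mem_image.2 ⟨w, hw, h⟩)
    have hnew : (a, y) ∉ R := fun h => hy' _ h rfl
    refine ⟨insert (a, y) R, .single (Or.inl ?_), ?_⟩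
    · exact Or.inr <| Or.inr <| Or.inr <| Or.inr <| Or.inr
        ⟨(a, y), hnew, rfl, Or.inl ⟨⟨_, hwR, hua⟩, hy'⟩⟩
    · intro x hx
      by_cases hxa : x = a
      · subst hxa
        exfalso
        apply hx
        right
        have : colS (insert (x, y) R) x = insert (x, y) (colS R x) := by
          ext p
          simp only [mem_colS, Finset.mem_insert]
          grind
        rw [this, Finset.card_insert_of_notMem (by simp [mem_colS, hnew]), hn]
      · refine ⟨?_, hxa⟩
        have : colS (insert (a, y) R) x = colS R x := by
          ext p
          simp only [mem_colS, Finset.mem_insert]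
          grind
        simpa [GoodCol, this] using hx
  · have hn3 : 3 ≤ n := by omega
    obtain ⟨ε, hε, hεR⟩ := exists_eps R a
    let T := (colS R a).image Prod.snd
    have hT : ∀ y, y ∈ T ↔ (a, y) ∈ R := by
      intro y
      simp only [T, Finset.mem_image, mem_colS]
      constructor
      · rintro ⟨⟨u, v⟩, ⟨h1, h2⟩, h3⟩
        simp only at h2 h3
        rwa [h2, h3] at h1
      · intro h
        exact ⟨_, ⟨h, rfl⟩, rfl⟩
    have hTc : T.card = n := by
      rw [← hn]
      apply Finset.card_image_of_injOn
      intro p hp q hq h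
      have hp := (mem_colS _ _ _).1 hp
      have hq := (mem_colS _ _ _).1 hq
      exact Prod.ext (hp.2.trans hq.2.symm) h
    have hTne : T.Nonempty := Finset.card_pos.1 (by omega)
    obtain ⟨y₁, hy₁, hmin₁⟩ := T.exists_min_image id hTne
    have hTne2 : (T.erase y₁).Nonempty := Finset.card_pos.1 (by
      rw [Finset.card_erase_of_mem hy₁]; omega)
    obtain ⟨y₂, hy₂, hmin₂⟩ := (T.erase y₁).exists_min_image id hTne2
    rw [Finset.mem_erase] at hy₂
    have hlt : y₁ < y₂ := lt_of_le_of_ne (hmin₁ _ hy₂.2) (Ne.symm hy₂.1)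
    have hv₁ := (hT _).1 hy₁
    have hv₂ := (hT _).1 hy₂.2
    let R₁ : GRD := insert (a + ε, y₁) (insert (a + ε, y₂) (R.erase (a, y₁)))
    have hstep : Step true R R₁ := by
      refine Or.inl <| Or.inr <| Or.inr <| Or.inr <| Or.inr <| Or.inl <| Or.inl
        ⟨a, y₁, y₂, ε, hε, hlt, hv₁, hv₂, ?_, Or.inl ⟨hεR, by simp [R₁]⟩⟩
      rintro t ht ⟨h1, h2⟩
      have := hmin₂ t (Finset.mem_erase.2 ⟨h1.ne', (hT _).2 ht⟩)
      simp only [id] at this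
      linarith
    have hne : a + ε ≠ a := by linarith
    have hca : colS R₁ a = (colS R a).erase (a, y₁) := by
      ext p
      simp only [R₁, mem_colS, Finset.mem_insert, Finset.mem_erase]
      grind
    have hcb : colS R₁ (a + ε) = {(a + ε, y₁), (a + ε, y₂)} := by
      ext p
      have := hεR p
      simp only [R₁, mem_colS, Finset.mem_insert, Finset.mem_erase, Finset.mem_singleton]
      grind
    have hcx : ∀ x, x ≠ a → x ≠ a + ε → colS R₁ x = colS R x := by
      intro x h1 h2
      ext p
      simp only [R₁, mem_colS, Finset.mem_insert, Finset.mem_erase]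
      grind
    have hcc : (colS R₁ a).card = n - 1 := by
      rw [hca, Finset.card_erase_of_mem ((mem_colS _ _ _).2 ⟨hv₁, rfl⟩), hn]
    obtain ⟨R', hR', hg⟩ := ih (n - 1) (by omega) R₁ a hcc
    refine ⟨R', .head hstep hR', fun x hx => ?_⟩
    obtain ⟨h1, h2⟩ := hg x hx
    refine ⟨?_, h2⟩
    by_cases hxb : x = a + ε
    · exfalso
      apply h1
      right
      rw [hxb, hcb, Finset.card_pair]
      intro h
      exact hlt.ne (Prod.ext_iff.1 h).2
    · simpa [GoodCol, hcx x h2 hxb] using h1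

theorem fix_all (S : Finset ℝ) : ∀ R : GRD, (∀ x, ¬ GoodCol R x → x ∈ S) →
    ∃ R' : GRD, Relation.ReflTransGen (Step true) R R' ∧ ∀ x, GoodCol R' x := by
  induction S using Finset.induction_on with
  | empty => exact fun R h => ⟨R, .refl, fun x => by_contra fun hx => by simpa using h x hx⟩
  | insert a S ha ih =>
    intro R h
    obtain ⟨R₁, h1, h2⟩ := fix_col _ R a rfl
    obtain ⟨R', h3, h4⟩ := ih R₁ (fun x hx =>
      Finset.mem_of_mem_insert_of_ne (h x (h2 x hx).1) (h2 x hx).2)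
    exact ⟨R', h1.trans h3, h4⟩

/-- every generalized rectangular diagram can be transformed by finitely
many elementary moves of type L into a diagram each of whose vertical edges contains
exactly two vertices. -/
theorem statement14 (R : GRD) :
    ∃ R' : GRD, Relation.ReflTransGen (Step true) R R' ∧ VertTwo R' := by
  obtain ⟨R', h1, h2⟩ := fix_all (R.image Prod.fst) R (fun x hx => by
    by_contra hxm
    apply hx
    left
    rw [Finset.card_eq_zero, Finset.eq_empty_iff_forall_notMem]
    intro p hp
    rw [mem_colS] at hp
    exact hxm (Finset.mem_image.2 ⟨p, hp⟩))
  refine ⟨R', h1, ?_⟩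
  rintro a ⟨y, hy⟩
  have hm : ∀ y, (a, y) ∈ R' ↔ (a, y) ∈ colS R' a := fun y => by simp [mem_colS]
  rcases h2 a with h | h
  · rw [Finset.card_eq_zero] at h
    rw [hm, h] at hy
    simp at hy
  · obtain ⟨⟨u₁, v₁⟩, ⟨u₂, v₂⟩, hne, hs⟩ := Finset.card_eq_two.1 h
    have e1 : u₁ = a := ((mem_colS R' a (u₁, v₁)).1 (by simp [hs])).2
    have e2 : u₂ = a := ((mem_colS R' a (u₂, v₂)).1 (by simp [hs])).2
    subst e1
    subst e2
    have hv : v₁ ≠ v₂ := fun h => hne (by rw [h])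
    rcases lt_or_gt_of_ne hv with hl | hl
    · exact ⟨v₁, v₂, hl, fun y => by rw [hm, hs]; simp⟩
    · exact ⟨v₂, v₁, hl, fun y => by rw [hm, hs]; simp [or_comm]⟩

end RectDiag
end
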